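/- arXiv:1206.3539 — 4 statements merged into one kernel-verified Lean document; each statement's English description precedes it below -/
import Mathlib

section
/- Let Y be an infinite-dimensional Banach space. If every infinite-dimensional separable closed subspace X of Y that is an ideal in Y has the strong diameter 2 property, then Y has the strong diameter 2 property. -/
universe u v

open Metric Set

section Defs

variable {Y : Type*} [NormedAddCommGroup Y] [NormedSpace ℝ Y]

/-- `X` is an ideal in `Y`. -/
def IsIdeal (X : Subspace ℝ Y) : Prop :=
  ∀ ε : ℝ, 0 < ε → ∀ E : Subspace ℝ Y, FiniteDimensional ℝ E →
    ∃ T : E →ₗ[ℝ] X,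
      (∀ e : E, (e : Y) ∈ X → ((T e : X) : Y) = (e : Y)) ∧
      (∀ e : E, ‖T e‖ ≤ (1 + ε) * ‖e‖)

/-- `X` is a super-ideal in `Y`. -/
def IsSuperIdeal (X : Subspace ℝ Y) : Prop :=
  ∀ ε : ℝ, 0 < ε → ∀ E : Subspace ℝ Y, FiniteDimensional ℝ E →
    ∃ T : E →ₗ[ℝ] X,
      (∀ e : E, (e : Y) ∈ X → ((T e : X) : Y) = (e : Y)) ∧
      (∀ e : E, (1 + ε)⁻¹ * ‖e‖ ≤ ‖T e‖ ∧ ‖T e‖ ≤ (1 + ε) * ‖e‖)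

/-- `X` is a super u-ideal in `Y`. -/
def IsSuperUIdeal (X : Subspace ℝ Y) : Prop :=
  ∀ ε : ℝ, 0 < ε → ∀ E : Subspace ℝ Y, FiniteDimensional ℝ E →
    ∃ T : E →ₗ[ℝ] X,
      (∀ e : E, (e : Y) ∈ X → ((T e : X) : Y) = (e : Y)) ∧
      (∀ e : E, (1 + ε)⁻¹ * ‖e‖ ≤ ‖T e‖ ∧ ‖T e‖ ≤ (1 + ε) * ‖e‖) ∧
      (∀ e : E, ‖(e : Y) - (2 : ℝ) • ((T e : X) : Y)‖ ≤ (1 + ε) * ‖e‖)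

/-- `φ : X* → Y*` is a Hahn-Banach extension operator. -/
def IsHahnBanachExtensionOperator (X : Subspace ℝ Y)
    (φ : (X →L[ℝ] ℝ) →L[ℝ] (Y →L[ℝ] ℝ)) : Prop :=
  ∀ f : X →L[ℝ] ℝ, (∀ x : X, φ f (x : Y) = f x) ∧ ‖φ f‖ = ‖f‖

/-- A set of functionals `V ⊆ Y*` is 1-norming for `Y`. -/
def IsOneNorming (V : Set (Y →L[ℝ] ℝ)) : Prop :=
  ∀ y : Y, ‖y‖ = sSup {r : ℝ | ∃ v ∈ V, ‖v‖ ≤ 1 ∧ r = |v y|}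

end Defs

section Props

variable (Z : Type*) [NormedAddCommGroup Z] [NormedSpace ℝ Z]

/-- A slice of the closed unit ball of `Z`. -/
def IsSlice (S : Set Z) : Prop :=
  ∃ (f : Z →L[ℝ] ℝ) (ε : ℝ), ‖f‖ = 1 ∧ 0 < ε ∧
    S = {z | z ∈ closedBall (0 : Z) 1 ∧ 1 - ε < f z}

/-- The local diameter 2 property. -/
def HasLocalDiameterTwoProperty : Prop :=
  ∀ S : Set Z, IsSlice Z S → Metric.diam S = 2

/-- The diameter 2 property. -/
def HasDiameterTwoProperty : Prop :=
  ∀ U : Set Z, U.Nonempty →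
    (∃ V : Set Z, @IsOpen (WeakSpace ℝ Z) _ V ∧ U = V ∩ closedBall (0 : Z) 1) →
    Metric.diam U = 2

/-- The strong diameter 2 property. -/
def HasStrongDiameterTwoProperty : Prop :=
  ∀ (n : ℕ), 0 < n → ∀ (S : Fin n → Set Z) (lam : Fin n → ℝ),
    (∀ i, IsSlice Z (S i)) → (∀ i, 0 ≤ lam i) → (∑ i, lam i) = 1 →
    Metric.diam {z : Z | ∃ x : Fin n → Z, (∀ i, x i ∈ S i) ∧ z = ∑ i, lam i • x i} = 2

/-- The Daugavet property. -/
def HasDaugavetProperty : Prop :=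
  ∀ T : Z →L[ℝ] Z, Module.finrank ℝ (LinearMap.range (T : Z →ₗ[ℝ] Z)) = 1 →
    ‖ContinuousLinearMap.id ℝ Z + T‖ = 1 + ‖T‖

end Props

/-- `X` is a Gurariĭ space. -/
def IsGurarii (X : Type*) [NormedAddCommGroup X] [NormedSpace ℝ X] : Prop :=
  ∀ ε : ℝ, 0 < ε →
    ∀ (F : Type) [NormedAddCommGroup F] [NormedSpace ℝ F] [FiniteDimensional ℝ F],
      ∀ (E : Subspace ℝ F) (TE : E →ₗᵢ[ℝ] X),
        ∃ TF : F →ₗ[ℝ] X,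
          (∀ e : E, TF (e : F) = TE e) ∧
          (∀ f : F, (1 + ε)⁻¹ * ‖f‖ ≤ ‖TF f‖ ∧ ‖TF f‖ ≤ (1 + ε) * ‖f‖)

/-- `X` is a Lindenstrauss space: its dual is isometric to some `L¹(μ)`. -/
def IsLindenstrauss (X : Type u) [NormedAddCommGroup X] [NormedSpace ℝ X] : Prop :=
  ∃ (α : Type u) (m : MeasurableSpace α) (μ : @MeasureTheory.Measure α m),
    Nonempty ((X →L[ℝ] ℝ) ≃ₗᵢ[ℝ] MeasureTheory.Lp ℝ 1 μ)

/-- The function `t ↦ ‖∑ tᵢ yᵢ‖` on the unit ball of `ℝ^ι`. -/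
noncomputable def nrmFun {Y : Type*} [NormedAddCommGroup Y] [NormedSpace ℝ Y]
    {ι : Type} [Fintype ι] (v : ι → Y) :
    C(closedBall (0 : ι → ℝ) 1, ℝ) :=
  ⟨fun t => ‖∑ i, (t : ι → ℝ) i • v i‖, by
    refine continuous_norm.comp (continuous_finsetSum _ fun i _ => ?_)
    exact ((continuous_apply i).comp continuous_subtype_val).smul continuous_const⟩

theorem nrm_close {Y : Type*} [NormedAddCommGroup Y] [NormedSpace ℝ Y]
    {ι : Type} [Fintype ι] (v w : ι → Y) (η : ℝ)
    (h : ∀ t : closedBall (0 : ι → ℝ) 1, |nrmFun v t - nrmFun w t| ≤ η) (t : ι → ℝ) :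
    ‖∑ i, t i • v i‖ ≤ ‖∑ i, t i • w i‖ + η * ‖t‖ := by
  by_cases ht : t = 0
  · subst ht; simp
  have hn : 0 < ‖t‖ := norm_pos_iff.mpr ht
  have key : ∀ u : ι → Y, ‖∑ i, (‖t‖⁻¹ • t) i • u i‖ = ‖t‖⁻¹ * ‖∑ i, t i • u i‖ := by
    intro u
    have : ∑ i, (‖t‖⁻¹ • t) i • u i = ‖t‖⁻¹ • ∑ i, t i • u i := by
      rw [Finset.smul_sum]; simp [mul_smul]
    rw [this, norm_smul, norm_inv, norm_norm]
  have h1 := h ⟨‖t‖⁻¹ • t, by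
    rw [mem_closedBall_zero_iff, norm_smul, norm_inv, norm_norm, inv_mul_cancel₀ hn.ne']⟩
  have h2 := (abs_le.mp h1).2
  simp only [nrmFun, ContinuousMap.coe_mk, key] at h2
  have h3 := mul_le_mul_of_nonneg_left h2 hn.le
  have h4 : ‖t‖ * (‖t‖⁻¹ * ‖∑ i, t i • v i‖ - ‖t‖⁻¹ * ‖∑ i, t i • w i‖)
      = ‖∑ i, t i • v i‖ - ‖∑ i, t i • w i‖ := by
    field_simp
  linarith

theorem nrm_pert {Y : Type*} [NormedAddCommGroup Y] [NormedSpace ℝ Y]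
    {m k : ℕ} (g g' : Fin m → Y) (y : Fin k → Y) (δ : ℝ)
    (h : ∀ i, ‖g i - g' i‖ ≤ δ) (t : closedBall (0 : Fin m ⊕ Fin k → ℝ) 1) :
    |nrmFun (Sum.elim g y) t - nrmFun (Sum.elim g' y) t| ≤ m * δ := by
  simp only [nrmFun, ContinuousMap.coe_mk]
  refine (abs_norm_sub_norm_le _ _).trans ?_
  simp only [Fintype.sum_sum_type, Sum.elim_inl, Sum.elim_inr, add_sub_add_right_eq_sub]
  rw [← Finset.sum_sub_distrib]
  refine (norm_sum_le _ _).trans ?_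
  have : ∀ i ∈ (Finset.univ : Finset (Fin m)),
      ‖(t : Fin m ⊕ Fin k → ℝ) (Sum.inl i) • g i - (t : Fin m ⊕ Fin k → ℝ) (Sum.inl i) • g' i‖
        ≤ δ := by
    intro i _
    rw [← smul_sub, norm_smul]
    have h1 : ‖(t : Fin m ⊕ Fin k → ℝ) (Sum.inl i)‖ ≤ 1 :=
      (norm_le_pi_norm _ _).trans (mem_closedBall_zero_iff.mp t.2)
    calc _ ≤ 1 * ‖g i - g' i‖ := by gcongr
      _ ≤ δ := by rw [one_mul]; exact h i
  refine (Finset.sum_le_sum this).trans ?_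
  simp

theorem step_mk {Y : Type*} [NormedAddCommGroup Y] [NormedSpace ℝ Y]
    (S : Set Y) (hS : TopologicalSpace.IsSeparable S) (m k : ℕ) :
    ∃ W : Set Y, W.Countable ∧ ∀ (g : Fin m → Y) (y : Fin k → Y), (∀ i, g i ∈ S) →
      ∀ η : ℝ, 0 < η → ∃ z : Fin k → Y, (∀ i, z i ∈ W) ∧
        ∀ t, |nrmFun (Sum.elim g z) t - nrmFun (Sum.elim g y) t| ≤ η := by
  have : TopologicalSpace.SeparableSpace S := hS.separableSpace
  have : SecondCountableTopology S := UniformSpace.secondCountable_of_separable S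
  let Φ : (Fin m → S) × (Fin k → Y) →
      (Fin m → S) × C(closedBall (0 : Fin m ⊕ Fin k → ℝ) 1, ℝ) :=
    fun p => (p.1, nrmFun (Sum.elim (fun i => (p.1 i : Y)) p.2))
  have hsep : TopologicalSpace.IsSeparable (range Φ) :=
    TopologicalSpace.IsSeparable.of_separableSpace _
  obtain ⟨T, hT, hTc, hTd⟩ := hsep.exists_countable_dense_subset
  choose pre' hpre' using (fun x => hT x.2 : ∀ x : T, ∃ p, Φ p = x)
  refine ⟨⋃ x : T, range (pre' x).2, ?_, ?_⟩
  · have := hTc.to_subtype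
    exact countable_iUnion fun x => countable_range _
  intro g y hg η hη
  let G : Fin m → S := fun i => ⟨g i, hg i⟩
  have hδ : 0 < η / (m + 1) := by positivity
  obtain ⟨x, hx, hd⟩ := Metric.mem_closure_iff.mp (hTd (mem_range_self (G, y)))
    (min (η / (m + 1)) (η / (m + 1))) (by positivity)
  rw [min_self] at hd
  refine ⟨(pre' ⟨x, hx⟩).2, fun i => mem_iUnion.mpr ⟨⟨x, hx⟩, mem_range_self i⟩, fun t => ?_⟩
  have hpx : Φ (pre' ⟨x, hx⟩) = x := hpre' ⟨x, hx⟩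
  rw [← hpx, Prod.dist_eq, max_lt_iff] at hd
  obtain ⟨hd1, hd2⟩ := hd
  have e1 := nrm_pert g (fun i => ((pre' ⟨x, hx⟩).1 i : Y)) (pre' ⟨x, hx⟩).2 (η / (m + 1)) (fun i => by
    rw [← dist_eq_norm]
    exact ((dist_le_pi_dist G (pre' ⟨x, hx⟩).1 i).trans hd1.le)) t
  have e2 : |nrmFun (Sum.elim g y) t - nrmFun (Sum.elim (fun i => ((pre' ⟨x, hx⟩).1 i : Y)) (pre' ⟨x, hx⟩).2) t|
      ≤ η / (m + 1) := by
    have := (ContinuousMap.dist_apply_le_dist (f := (Φ (G, y)).2) (g := (Φ (pre' ⟨x, hx⟩)).2) t).trans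
      hd2.le
    rwa [Real.dist_eq] at this
  have e3 : (m : ℝ) * (η / (m + 1)) + η / (m + 1) = η := by field_simp
  rw [abs_le] at *
  constructor <;> linarith [e1.1, e1.2, e2.1, e2.2]

theorem step {Y : Type*} [NormedAddCommGroup Y] [NormedSpace ℝ Y]
    (S : Submodule ℝ Y) (hS : TopologicalSpace.IsSeparable (S : Set Y)) :
    ∃ S' : Submodule ℝ Y, TopologicalSpace.IsSeparable (S' : Set Y) ∧ S ≤ S' ∧
      ∀ (m k : ℕ) (g : Fin m → Y) (y : Fin k → Y), (∀ i, g i ∈ S) →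
      ∀ η : ℝ, 0 < η → ∃ z : Fin k → Y, (∀ i, z i ∈ S') ∧
        ∀ t, |nrmFun (Sum.elim g z) t - nrmFun (Sum.elim g y) t| ≤ η := by
  choose W hWc hW using fun m k => step_mk (S : Set Y) hS m k
  refine ⟨Submodule.span ℝ ((S : Set Y) ∪ ⋃ m, ⋃ k, W m k), ?_, ?_, ?_⟩
  · apply TopologicalSpace.IsSeparable.span
    exact hS.union (countable_iUnion fun m => countable_iUnion fun k => hWc m k).isSeparable
  · exact fun x hx => Submodule.subset_span (Or.inl hx)
  · intro m k g y hg η hη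
    obtain ⟨z, hz, h⟩ := hW m k g y hg η hη
    exact ⟨z, fun i => Submodule.subset_span
      (Or.inr (mem_iUnion.mpr ⟨m, mem_iUnion.mpr ⟨k, hz i⟩⟩)), h⟩

/-- Sims-Yost: countable sets lie in separable closed ideals. -/
theorem exists_sep_ideal {Y : Type*} [NormedAddCommGroup Y] [NormedSpace ℝ Y]
    (A : Set Y) (hA : A.Countable) :
    ∃ X : Subspace ℝ Y, IsClosed (X : Set Y) ∧ TopologicalSpace.SeparableSpace X ∧
      IsIdeal X ∧ A ⊆ X := by
  choose nxt hsep hle hnxt using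
    fun S : {S : Submodule ℝ Y // TopologicalSpace.IsSeparable (S : Set Y)} => step S.1 S.2
  let Z : ℕ → {S : Submodule ℝ Y // TopologicalSpace.IsSeparable (S : Set Y)} := fun n =>
    Nat.rec ⟨Submodule.span ℝ A, hA.isSeparable.span⟩ (fun _ S => ⟨nxt S, hsep S⟩) n
  have hZs : ∀ n, (Z (n+1)).1 = nxt (Z n) := fun n => rfl
  have hmono : Monotone (fun n => (Z n).1) := monotone_nat_of_le_succ fun n => by
    simp only [hZs]; exact hle _
  let U : Submodule ℝ Y := ⨆ n, (Z n).1
  have hU : ∀ x, x ∈ U ↔ ∃ n, x ∈ (Z n).1 := fun x =>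
    Submodule.mem_iSup_of_directed _ hmono.directed_le
  have hUc : (U : Set Y) = ⋃ n, ((Z n).1 : Set Y) := by
    ext x; simp only [SetLike.mem_coe, hU, mem_iUnion]
  let X : Submodule ℝ Y := U.topologicalClosure
  have hUX : U ≤ X := U.le_topologicalClosure
  refine ⟨X, U.isClosed_topologicalClosure, ?_, ?_, ?_⟩
  · have : TopologicalSpace.IsSeparable (X : Set Y) := by
      rw [Submodule.topologicalClosure_coe, hUc]
      exact (TopologicalSpace.IsSeparable.iUnion fun n => (Z n).2).closure
    exact this.separableSpace
  · intro ε hε E hE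
    let G : Submodule ℝ E := X.comap E.subtype
    obtain ⟨G', hG'⟩ := G.exists_isCompl
    let bG := Module.finBasis ℝ G
    let bG' := Module.finBasis ℝ G'
    let b := (bG.prod bG').map (Submodule.prodEquivOfIsCompl G G' hG')
    let g : Fin _ → X := fun i => ⟨((bG i : E) : Y), (bG i).2⟩
    let y : Fin _ → Y := fun i => ((bG' i : E) : Y)
    have hb1 : ∀ i, b (Sum.inl i) = (bG i : E) := fun i => by simp [b]
    have hb2 : ∀ i, b (Sum.inr i) = (bG' i : E) := fun i => by simp [b]
    have hbv : ∀ i, ((b i : E) : Y) = Sum.elim (fun i => (g i : Y)) y i := by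
      rintro (i | i)
      · simp [hb1, g]
      · simp [hb2, y]
    -- lower bound
    let L := LinearMap.toContinuousLinearMap b.equivFun.toLinearMap
    set C := ‖L‖ + 1 with hC
    have hCpos : 0 < C := by positivity
    have hL : ∀ e : E, ‖b.equivFun e‖ ≤ C * ‖e‖ := fun e => by
      have := L.le_opNorm e
      have h2 : L e = b.equivFun e := rfl
      rw [h2] at this
      nlinarith [norm_nonneg e]
    -- approximations
    set M : ℝ := (Module.finrank ℝ G : ℝ) with hM
    set δ : ℝ := ε / C / (2 * M + 1) with hδ
    have hMn : 0 ≤ M := Nat.cast_nonneg _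
    have hδpos : 0 < δ := by positivity
    have happ : ∀ i, ∃ x ∈ U, ‖(g i : Y) - x‖ ≤ δ := fun i => by
      obtain ⟨x, hx, hd⟩ := Metric.mem_closure_iff.mp (g i).2 δ hδpos
      exact ⟨x, hx, by rw [← dist_eq_norm]; exact hd.le⟩
    choose g' hg'U hg' using happ
    choose N hN using fun i => (hU (g' i)).mp (hg'U i)
    let n := Finset.univ.sup N
    have hgn : ∀ i, g' i ∈ (Z n).1 := fun i =>
      hmono (Finset.le_sup (f := N) (Finset.mem_univ i)) (hN i)
    obtain ⟨z, hz, hzt⟩ := hnxt (Z n) _ _ g' y hgn δ hδpos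
    have hzX : ∀ i, z i ∈ X := fun i => hUX ((hU _).mpr ⟨n + 1, hz i⟩)
    let zX : Fin _ → X := fun i => ⟨z i, hzX i⟩
    let T : E →ₗ[ℝ] X := b.constr ℝ (Sum.elim g zX)
    refine ⟨T, ?_, ?_⟩
    · intro e he
      have : (X.subtype ∘ₗ T) ∘ₗ G.subtype = E.subtype ∘ₗ G.subtype := by
        apply bG.ext
        intro i
        simp only [LinearMap.comp_apply, Submodule.subtype_apply]
        have hT : T (b (Sum.inl i)) = g i := b.constr_basis ℝ _ _
        rw [hb1] at hT
        rw [hT]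
      exact LinearMap.congr_fun this ⟨e, he⟩
    · intro e
      have hTe : ((T e : X) : Y) =
          ∑ i, b.equivFun e i • Sum.elim (fun i => (g i : Y)) z i := by
        simp only [T, Module.Basis.constr_apply_fintype, Submodule.coe_sum, Submodule.coe_smul]
        refine Finset.sum_congr rfl ?_
        rintro (i | i) _ <;> simp [zX]
      have hee : (e : Y) = ∑ i, b.equivFun e i • Sum.elim (fun i => (g i : Y)) y i := by
        conv_lhs => rw [← b.sum_equivFun e]
        simp only [Submodule.coe_sum, Submodule.coe_smul, hbv]
      have hcl := nrm_close (Sum.elim (fun i => (g i : Y)) z) (Sum.elim (fun i => (g i : Y)) y)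
        (ε / C) (fun t => by
          have e1 := nrm_pert (fun i => (g i : Y)) g' z δ hg' t
          have e2 := nrm_pert (fun i => (g i : Y)) g' y δ hg' t
          have e3 := hzt t
          have e4 : M * δ + M * δ + δ = ε / C := by rw [hδ]; field_simp; ring
          rw [← hM] at e1 e2
          rw [abs_le] at *
          constructor <;> linarith [e1.1, e1.2, e2.1, e2.2, e3.1, e3.2]) (b.equivFun e)
      rw [← hTe, ← hee] at hcl
      have h5 : ε / C * ‖b.equivFun e‖ ≤ ε * ‖e‖ := by
        calc _ ≤ ε / C * (C * ‖e‖) := by gcongr; exact hL e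
          _ = ε * ‖e‖ := by field_simp
      have h6 : ‖T e‖ = ‖((T e : X) : Y)‖ := rfl
      have h7 : ‖e‖ = ‖(e : Y)‖ := rfl
      rw [h6]
      rw [← h7] at hcl
      linarith
  · intro a ha
    exact hUX ((hU a).mpr ⟨0, Submodule.subset_span ha⟩)

theorem strongDiameterTwo_of_separable_ideals
    (Y : Type*) [NormedAddCommGroup Y] [NormedSpace ℝ Y] [CompleteSpace Y]
    (hY : ¬ FiniteDimensional ℝ Y)
    (h : ∀ X : Subspace ℝ Y, IsClosed (X : Set Y) → ¬ FiniteDimensional ℝ X →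
      TopologicalSpace.SeparableSpace X → IsIdeal X → HasStrongDiameterTwoProperty X) :
    HasStrongDiameterTwoProperty Y := by
  intro n hn S lam hS hlam hsum
  choose f ε hf hε hSe using hS
  have hnorm : ∀ i (k : ℕ), ∃ y : Y, ‖y‖ ≤ 1 ∧ 1 - 1 / ((k : ℝ) + 1) < f i y := by
    intro i k
    have h0 : (0 : ℝ) < 1 / ((k : ℝ) + 1) := by positivity
    obtain ⟨x, hx, hfx⟩ := (f i).exists_lt_apply_of_lt_opNorm
      (r := 1 - 1 / ((k : ℝ) + 1)) (by rw [hf]; linarith)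
    rw [Real.norm_eq_abs] at hfx
    rcases le_total 0 (f i x) with h1 | h1
    · exact ⟨x, hx.le, by rwa [abs_of_nonneg h1] at hfx⟩
    · exact ⟨-x, by rw [norm_neg]; exact hx.le, by rwa [abs_of_nonpos h1, ← map_neg] at hfx⟩
  choose p hp1 hp2 using hnorm
  let B := Module.Basis.ofVectorSpace ℝ Y
  have : Infinite (Module.Basis.ofVectorSpaceIndex ℝ Y) := by
    by_contra hfin
    rw [not_infinite_iff_finite] at hfin
    exact hY (Module.Finite.of_basis B)
  let u : ℕ → Y := fun j => B (Infinite.natEmbedding _ j)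
  have hu : LinearIndependent ℝ u :=
    B.linearIndependent.comp _ (Infinite.natEmbedding _).injective
  obtain ⟨X, hXc, hXs, hXi, hAX⟩ := exists_sep_ideal
    (range u ∪ ⋃ i, range (p i))
    ((countable_range u).union (countable_iUnion fun i => countable_range _))
  have hXinf : ¬ FiniteDimensional ℝ X := by
    intro hfd
    let u' : ℕ → X := fun j => ⟨u j, hAX (Or.inl (mem_range_self j))⟩
    have hu' : LinearIndependent ℝ u' := LinearIndependent.of_comp X.subtype hu
    have := hu'.finite
    exact not_finite ℕ
  have hX := h X hXc hXinf hXs hXi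
  have hfX : ∀ i, ‖(f i).comp X.subtypeL‖ = 1 := by
    intro i
    apply le_antisymm
    · refine ContinuousLinearMap.opNorm_le_bound _ zero_le_one fun x => ?_
      have := (f i).le_opNorm x
      rwa [hf] at this
    · refine le_of_forall_pos_lt_add fun η hη => ?_
      obtain ⟨k, hk⟩ := exists_nat_one_div_lt hη
      let q : X := ⟨p i k, hAX (Or.inr (mem_iUnion.mpr ⟨i, mem_range_self k⟩))⟩
      have h1 := ((f i).comp X.subtypeL).le_opNorm q
      have h2 : ((f i).comp X.subtypeL) q = f i (p i k) := rfl
      have h3 : ‖q‖ ≤ 1 := hp1 i k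
      rw [h2] at h1
      have h4 := (le_abs_self _).trans h1
      have h5 := mul_le_of_le_one_right (norm_nonneg ((f i).comp X.subtypeL)) h3
      have := hp2 i k
      linarith
  have hd := hX n hn (fun i => {z | z ∈ closedBall (0 : X) 1 ∧ 1 - ε i < (f i).comp X.subtypeL z})
    lam (fun i => ⟨_, ε i, hfX i, hε i, rfl⟩) hlam hsum
  have hsub : {z : Y | ∃ x : Fin n → Y, (∀ i, x i ∈ S i) ∧ z = ∑ i, lam i • x i}
      ⊆ closedBall 0 1 := by
    rintro z ⟨x, hx, rfl⟩
    rw [mem_closedBall_zero_iff]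
    refine (norm_sum_le _ _).trans ?_
    rw [← hsum]
    refine Finset.sum_le_sum fun i _ => ?_
    have h1 := hx i
    rw [hSe i] at h1
    have h2 := mem_closedBall_zero_iff.mp h1.1
    rw [norm_smul, Real.norm_of_nonneg (hlam i)]
    exact mul_le_of_le_one_right (hlam i) h2
  apply le_antisymm
  · refine (Metric.diam_mono hsub isBounded_closedBall).trans ?_
    have := Metric.diam_closedBall (x := (0 : Y)) (r := 1) zero_le_one
    linarith
  · rw [← hd, ← (isometry_subtype_coe : Isometry ((↑) : X → Y)).diam_image]
    refine Metric.diam_mono ?_ (isBounded_closedBall.subset hsub)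
    rintro _ ⟨z, ⟨x, hx, rfl⟩, rfl⟩
    refine ⟨fun i => (x i : Y), fun i => ?_, by simp⟩
    rw [hSe i]
    refine ⟨?_, (hx i).2⟩
    have := (hx i).1
    rw [mem_closedBall_zero_iff] at this ⊢
    exact this
end

section
/- Let Y be an infinite-dimensional Banach space. If every infinite-dimensional separable closed subspace X of Y that is an ideal in Y has the local diameter 2 property, then Y has the local diameter 2 property. -/
universe u v

open Metric Set

open TopologicalSpace in
theorem aux_countable {α β : Type*} [TopologicalSpace β] [SecondCountableTopology β] (f : α → β) :
    ∃ C : Set α, C.Countable ∧ ∀ a, f a ∈ closure (f '' C) := by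
  obtain ⟨c, hc, hd⟩ := TopologicalSpace.exists_countable_dense (range f)
  have : ∀ b : range f, ∃ a, f a = b := fun b => b.2
  choose g hg using this
  refine ⟨g '' c, hc.image g, fun a => ?_⟩
  have h1 := hd ⟨f a, mem_range_self a⟩
  have h2 := closure_subtype.1 h1
  have : f '' (g '' c) = Subtype.val '' c := by
    rw [image_image]; exact image_congr (fun b _ => hg b)
  rwa [this]

section
variable {Y : Type*} [NormedAddCommGroup Y] [NormedSpace ℝ Y]

/-- Linear combination of two tuples. -/
def auxTL {m k : ℕ} (x : Fin m → Y) (y : Fin k → Y) :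
    ((Fin m → ℝ) × (Fin k → ℝ)) →ₗ[ℝ] Y :=
  (Fintype.linearCombination ℝ x).coprod (Fintype.linearCombination ℝ y)

theorem auxTL_apply {m k : ℕ} (x : Fin m → Y) (y : Fin k → Y) (c) :
    auxTL x y c = ∑ i, c.1 i • x i + ∑ j, c.2 j • y j := by
  simp [auxTL, Fintype.linearCombination_apply]

theorem auxTL_continuous {m k : ℕ} (x : Fin m → Y) (y : Fin k → Y) :
    Continuous (auxTL x y) := by
  simp only [funext (auxTL_apply x y)]
  fun_prop

theorem aux_homog {m k : ℕ} (x : Fin m → Y) (y z : Fin k → Y) (δ : ℝ)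
    (h : ∀ c, ‖c‖ ≤ 1 → ‖auxTL x z c‖ ≤ ‖auxTL x y c‖ + δ) (c) :
    ‖auxTL x z c‖ ≤ ‖auxTL x y c‖ + δ * ‖c‖ := by
  rcases eq_or_ne c 0 with rfl | hc
  · simp
  have hc' : 0 < ‖c‖ := norm_pos_iff.2 hc
  have := h (‖c‖⁻¹ • c) (by rw [norm_smul, norm_inv, norm_norm, inv_mul_cancel₀ hc'.ne'])
  rw [map_smul, map_smul, norm_smul, norm_smul, norm_inv, norm_norm] at this
  have h2 := mul_le_mul_of_nonneg_left this hc'.le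
  rw [mul_add, mul_inv_cancel_left₀ hc'.ne', mul_inv_cancel_left₀ hc'.ne'] at h2
  linarith

/-- `B` contains approximate copies over `A` of all finite tuples. -/
def AuxApprox (A B : Submodule ℝ Y) : Prop :=
  ∀ (m k : ℕ) (x : Fin m → Y) (y : Fin k → Y) (δ : ℝ), (∀ i, x i ∈ A) → 0 < δ →
    ∃ z : Fin k → Y, (∀ j, z j ∈ B) ∧
      ∀ c, ‖auxTL x z c‖ ≤ ‖auxTL x y c‖ + δ * ‖c‖

theorem auxTL_close {m k : ℕ} (x x' : Fin m → Y) (y : Fin k → Y) (η : ℝ)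
    (h : ∀ i, ‖x i - x' i‖ ≤ η) (c) :
    ‖auxTL x y c‖ ≤ ‖auxTL x' y c‖ + (m * η) * ‖c‖ := by
  have h1 : auxTL x y c = auxTL x' y c + ∑ i, c.1 i • (x i - x' i) := by
    simp only [auxTL_apply, smul_sub, Finset.sum_sub_distrib]; abel
  rw [h1]
  refine (norm_add_le _ _).trans (by
    gcongr
    refine (norm_sum_le _ _).trans ?_
    calc ∑ i, ‖c.1 i • (x i - x' i)‖ ≤ ∑ i : Fin m, ‖c‖ * η := by
          refine Finset.sum_le_sum fun i _ => ?_
          rw [norm_smul]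
          exact mul_le_mul ((norm_le_pi_norm c.1 i).trans (norm_fst_le c)) (h i)
            (norm_nonneg _) (norm_nonneg _)
      _ = m * η * ‖c‖ := by simp; ring)

open TopologicalSpace in
theorem aux_step1 (A : Submodule ℝ Y) (hA : IsSeparable (A : Set Y)) (m k : ℕ) :
    ∃ D : Set Y, D.Countable ∧ ∀ (x : Fin m → Y) (y : Fin k → Y) (δ : ℝ), (∀ i, x i ∈ A) → 0 < δ →
    ∃ z : Fin k → Y, (∀ j, z j ∈ D) ∧
      ∀ c, ‖auxTL x z c‖ ≤ ‖auxTL x y c‖ + δ * ‖c‖ := by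
  have : SeparableSpace A := hA.separableSpace
  have : SecondCountableTopology A := UniformSpace.secondCountable_of_separable A
  let K := closedBall (0 : (Fin m → ℝ) × (Fin k → ℝ)) 1
  have : CompactSpace K := isCompact_iff_compactSpace.1 (isCompact_closedBall _ _)
  let p : (Fin m → A) × (Fin k → Y) → (Fin m → A) × C(K, ℝ) := fun q =>
    (q.1, ⟨fun c => ‖auxTL (fun i => (q.1 i : Y)) q.2 c‖,
      ((auxTL_continuous _ _).comp continuous_subtype_val).norm⟩)
  obtain ⟨C, hC, hd⟩ := aux_countable p
  refine ⟨⋃ q ∈ C, range q.2, hC.biUnion fun q _ => countable_range _, fun x y δ hx hδ => ?_⟩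
  set η : ℝ := δ / (2 * m + 1) with hη
  have hηp : 0 < η := by positivity
  obtain ⟨b, ⟨q, hq, rfl⟩, hb⟩ := Metric.mem_closure_iff.1
    (hd (fun i => ⟨x i, hx i⟩, y)) η hηp
  rw [Prod.dist_eq, max_lt_iff] at hb
  obtain ⟨hb1, hb2⟩ := hb
  refine ⟨q.2, fun j => mem_biUnion hq (mem_range_self j), ?_⟩
  have e1 : ∀ i, ‖x i - q.1 i‖ ≤ η := fun i => by
    have := (dist_le_pi_dist _ _ i).trans hb1.le
    rwa [Subtype.dist_eq, dist_eq_norm] at this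
  apply aux_homog
  intro c hc
  have h1 := auxTL_close x (fun i => (q.1 i : Y)) q.2 η e1 c
  have h2 := auxTL_close (fun i => (q.1 i : Y)) x y η
    (fun i => by rw [norm_sub_rev]; exact e1 i) c
  have h3 : dist (‖auxTL x y c‖) (‖auxTL (fun i => (q.1 i : Y)) q.2 c‖) ≤ η :=
    (ContinuousMap.dist_apply_le_dist (f := (p (fun i => ⟨x i, hx i⟩, y)).2)
      (g := (p q).2) ⟨c, by simpa [K] using hc⟩).trans hb2.le
  rw [Real.dist_eq] at h3
  have h4 := (abs_le.1 h3).1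
  have h5 : m * η * ‖c‖ ≤ m * η := mul_le_of_le_one_right (by positivity) hc
  have h6 : (2 * m + 1) * η = δ := by rw [hη]; field_simp
  nlinarith

open TopologicalSpace in
theorem aux_step (A : Submodule ℝ Y) (hA : IsSeparable (A : Set Y)) :
    ∃ B : Submodule ℝ Y, IsSeparable (B : Set Y) ∧ A ≤ B ∧ AuxApprox A B := by
  choose D hD hD' using aux_step1 A hA
  refine ⟨Submodule.span ℝ ((A : Set Y) ∪ ⋃ m, ⋃ k, D m k), ?_, ?_, ?_⟩
  · apply IsSeparable.span
    refine hA.union (Set.Countable.isSeparable ?_)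
    exact countable_iUnion fun m => countable_iUnion fun k => hD m k
  · intro a ha
    exact Submodule.subset_span (Or.inl ha)
  · intro m k x y δ hx hδ
    obtain ⟨z, hz, hz'⟩ := hD' m k x y δ hx hδ
    exact ⟨z, fun j => Submodule.subset_span (Or.inr (mem_iUnion₂.2 ⟨m, k, hz j⟩)), hz'⟩

theorem aux_ideal (X : Submodule ℝ Y) (hX : AuxApprox X X) : IsIdeal X := by
  intro ε hε E hE
  let P : Submodule ℝ E := X.comap E.subtype
  obtain ⟨Q, hPQ⟩ := P.exists_isCompl
  let bP := Module.finBasis ℝ P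
  let bQ := Module.finBasis ℝ Q
  let Φ : E ≃ₗ[ℝ] (Fin (Module.finrank ℝ P) → ℝ) × (Fin (Module.finrank ℝ Q) → ℝ) :=
    (Submodule.prodEquivOfIsCompl P Q hPQ).symm.trans
      (LinearEquiv.prodCongr bP.equivFun bQ.equivFun)
  let x : Fin (Module.finrank ℝ P) → Y := fun i => ((bP i : E) : Y)
  let y : Fin (Module.finrank ℝ Q) → Y := fun i => ((bQ i : E) : Y)
  have hx : ∀ i, x i ∈ X := fun i => (bP i).2
  have key : ∀ e : E, auxTL x y (Φ e) = e := by
    intro e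
    obtain ⟨⟨p, q⟩, rfl⟩ := (Submodule.prodEquivOfIsCompl P Q hPQ).surjective e
    have h1 : (p : E) = ∑ i, bP.equivFun p i • (bP i : E) := by
      have := congrArg P.subtype (bP.sum_equivFun p)
      rw [map_sum] at this
      simp only [map_smul, Submodule.subtype_apply] at this
      exact this.symm
    have h2 : (q : E) = ∑ i, bQ.equivFun q i • (bQ i : E) := by
      have := congrArg Q.subtype (bQ.sum_equivFun q)
      rw [map_sum] at this
      simp only [map_smul, Submodule.subtype_apply] at this
      exact this.symm
    have h1' := congrArg (E.subtype) h1
    have h2' := congrArg (E.subtype) h2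
    rw [map_sum] at h1' h2'
    simp only [map_smul, Submodule.subtype_apply] at h1' h2'
    rw [auxTL_apply]
    simp only [Φ, LinearEquiv.trans_apply, LinearEquiv.symm_apply_apply,
      LinearEquiv.prodCongr_apply, x, y]
    rw [← h1', ← h2']
    simp
  obtain ⟨M, hM, hMb⟩ : ∃ M : ℝ, 0 < M ∧ ∀ e : E, ‖Φ e‖ ≤ M * ‖e‖ :=
    (LinearMap.toContinuousLinearMap Φ.toLinearMap).bound
  obtain ⟨z, hz, hzb⟩ := hX _ _ x y (ε / M) hx (by positivity)
  have hmem : ∀ c, auxTL x z c ∈ X := fun c => by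
    rw [auxTL_apply]
    exact X.add_mem (X.sum_mem fun i _ => X.smul_mem _ (hx i))
      (X.sum_mem fun i _ => X.smul_mem _ (hz i))
  refine ⟨(LinearMap.codRestrict X (auxTL x z) hmem).comp (Φ : E →ₗ[ℝ] _), ?_, ?_⟩
  · intro e he
    have h0 : (Φ e).2 = 0 := by
      have : (Submodule.prodEquivOfIsCompl P Q hPQ).symm e = (⟨e, he⟩, 0) := by
        rw [LinearEquiv.symm_apply_eq]; simp
      simp only [Φ, LinearEquiv.trans_apply, this, LinearEquiv.prodCongr_apply, map_zero]
    conv_rhs => rw [← key e]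
    change auxTL x z (Φ e) = _
    rw [auxTL_apply, auxTL_apply, h0]
    simp
  · intro e
    have h1 := hzb (Φ e)
    rw [key e] at h1
    change ‖auxTL x z (Φ e)‖ ≤ _
    have h2 : ε / M * ‖Φ e‖ ≤ ε * ‖e‖ := by
      calc ε / M * ‖Φ e‖ ≤ ε / M * (M * ‖e‖) := by gcongr; exact hMb e
        _ = _ := by field_simp
    have h3 : ‖(e : Y)‖ = ‖e‖ := rfl
    linarith

open TopologicalSpace in
theorem aux_exists_ideal (S : Set Y) (hS : S.Countable) :
    ∃ X : Submodule ℝ Y, S ⊆ X ∧ IsClosed (X : Set Y) ∧ IsSeparable (X : Set Y) ∧ IsIdeal X := by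
  choose B hB hAB hap using aux_step (Y := Y)
  let F : ℕ → {A : Submodule ℝ Y // IsSeparable (A : Set Y)} := fun n =>
    Nat.rec ⟨Submodule.span ℝ S, hS.isSeparable.span⟩ (fun _ A => ⟨B A.1 A.2, hB A.1 A.2⟩) n
  have hmono : Monotone fun n => (F n).1 := monotone_nat_of_le_succ fun n => hAB _ (F n).2
  have happ : ∀ n, AuxApprox (F n).1 (F (n + 1)).1 := fun n => hap _ (F n).2
  let U : Submodule ℝ Y := ⨆ n, (F n).1
  have hU : ∀ y, y ∈ U ↔ ∃ n, y ∈ (F n).1 := fun y =>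
    Submodule.mem_iSup_of_directed _ hmono.directed_le
  have hFU : ∀ n, (F n).1 ≤ U := fun n => le_iSup (fun n => (F n).1) n
  have hUs : (U : Set Y) = ⋃ n, ((F n).1 : Set Y) := by
    ext y; simp [hU]
  refine ⟨U.topologicalClosure, ?_, U.isClosed_topologicalClosure, ?_, ?_⟩
  · exact fun s hs => U.le_topologicalClosure (hFU 0 (Submodule.subset_span hs))
  · rw [Submodule.topologicalClosure_coe, hUs]
    exact (IsSeparable.iUnion fun n => (F n).2).closure
  · apply aux_ideal
    intro m k x y δ hx hδ
    set η : ℝ := δ / (2 * m + 1) with hη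
    have hηp : 0 < η := by positivity
    have : ∀ i, ∃ x' n, x' ∈ (F n).1 ∧ ‖x i - x'‖ ≤ η := fun i => by
      have h1 : x i ∈ closure (U : Set Y) := hx i
      obtain ⟨b, hb, hd⟩ := Metric.mem_closure_iff.1 h1 η hηp
      obtain ⟨n, hn⟩ := (hU b).1 hb
      exact ⟨b, n, hn, by rw [← dist_eq_norm]; exact hd.le⟩
    choose x' n hn hxx using this
    have hN : ∀ i, x' i ∈ (F (Finset.univ.sup n)).1 := fun i =>
      hmono (Finset.le_sup (Finset.mem_univ i)) (hn i)
    obtain ⟨z, hz, hzb⟩ := happ _ m k x' y η hN hηp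
    refine ⟨z, fun j => U.le_topologicalClosure (hFU (Finset.univ.sup n + 1) (hz j)), fun c => ?_⟩
    have h1 := auxTL_close x x' z η hxx c
    have h2 := auxTL_close x' x y η (fun i => by rw [norm_sub_rev]; exact hxx i) c
    have h3 := hzb c
    have h6 : δ = (2 * m + 1) * η := by rw [hη]; field_simp
    rw [h6]
    linarith

end

theorem localDiameterTwo_of_separable_ideals
    (Y : Type*) [NormedAddCommGroup Y] [NormedSpace ℝ Y] [CompleteSpace Y]
    (hY : ¬ FiniteDimensional ℝ Y)
    (h : ∀ X : Subspace ℝ Y, IsClosed (X : Set Y) → ¬ FiniteDimensional ℝ X →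
      TopologicalSpace.SeparableSpace X → IsIdeal X → HasLocalDiameterTwoProperty X) :
    HasLocalDiameterTwoProperty Y := by
  rintro S ⟨f, ε, hf, hε, rfl⟩
  -- an infinite linearly independent sequence
  obtain ⟨v, hv⟩ : ∃ v : ℕ → Y, LinearIndependent ℝ v := by
    let b := Module.Basis.ofVectorSpace ℝ Y
    have : Infinite (Module.Basis.ofVectorSpaceIndex ℝ Y) := by
      by_contra hfin
      rw [not_infinite_iff_finite] at hfin
      exact hY (Module.Finite.of_basis b)
    exact ⟨_, b.linearIndependent.comp _ (Infinite.natEmbedding _).injective⟩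
  -- a norming sequence
  have hnorm : ∀ n : ℕ, ∃ y : Y, (1 - 1 / ((n : ℝ) + 1)) * ‖y‖ < ‖f y‖ := by
    intro n
    by_contra! hcon
    have hn : (0 : ℝ) ≤ 1 - 1 / ((n : ℝ) + 1) := by
      rw [sub_nonneg, div_le_one (by positivity)]
      have : (0 : ℝ) ≤ n := n.cast_nonneg
      linarith
    have := f.opNorm_le_bound hn hcon
    have : (0 : ℝ) < 1 / ((n : ℝ) + 1) := by positivity
    linarith
  choose w hw using hnorm
  obtain ⟨X, hSX, hcl, hsep, hid⟩ := aux_exists_ideal (range v ∪ range w)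
    ((countable_range v).union (countable_range w))
  have hinf : ¬ FiniteDimensional ℝ X := by
    intro hfd
    have hli : LinearIndependent ℝ (fun n => (⟨v n, hSX (Or.inl ⟨n, rfl⟩)⟩ : X)) :=
      LinearIndependent.of_comp X.subtype hv
    have := hli.finite
    exact not_finite ℕ
  have hL := h X hcl hinf hsep.separableSpace hid
  let g : X →L[ℝ] ℝ := f.comp X.subtypeL
  have hg : ‖g‖ = 1 := by
    apply le_antisymm
    · refine g.opNorm_le_bound zero_le_one fun x => ?_
      have := f.le_opNorm (x : Y)
      rw [hf] at this
      exact this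
    · have hn : ∀ n : ℕ, 1 - 1 / ((n : ℝ) + 1) ≤ ‖g‖ := by
        intro n
        have h1 := g.le_opNorm ⟨w n, hSX (Or.inr ⟨n, rfl⟩)⟩
        change ‖f (w n)‖ ≤ ‖g‖ * ‖w n‖ at h1
        have h2 := (hw n).trans_le h1
        by_contra! h3
        exact absurd (mul_le_mul_of_nonneg_right h3.le (norm_nonneg (w n))) (not_le.2 h2)
      have ht : Filter.Tendsto (fun n : ℕ => 1 - 1 / ((n : ℝ) + 1)) Filter.atTop (nhds (1 - 0)) :=
        tendsto_const_nhds.sub tendsto_one_div_add_atTop_nhds_zero_nat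
      rw [sub_zero] at ht
      exact le_of_tendsto' ht hn
  have h2 := hL _ ⟨g, ε, hg, hε, rfl⟩
  have hsub : {z : Y | z ∈ closedBall (0 : Y) 1 ∧ 1 - ε < f z} ⊆ closedBall (0 : Y) 1 :=
    fun z hz => hz.1
  apply le_antisymm
  · refine (Metric.diam_mono hsub isBounded_closedBall).trans ?_
    simpa using Metric.diam_closedBall (x := (0 : Y)) (zero_le_one)
  · rw [← h2, ← (isometry_subtype_coe (s := (X : Set Y))).diam_image]
    refine Metric.diam_mono ?_ (isBounded_closedBall.subset hsub)
    rintro _ ⟨z, ⟨hz1, hz2⟩, rfl⟩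
    refine ⟨?_, hz2⟩
    simpa using hz1
end

section
/- Let X be a Gurariĭ space. Then X is a super-ideal in every superspace: for every Banach space Y and every linear isometric embedding i : X → Y, the subspace i(X) is a super-ideal in Y. -/
universe u v

open Metric Set

/-- A bare copy of `Fin n → ℝ` without a norm. -/
def GSp (n : ℕ) : Type := Fin n → ℝ

instance GSp.instAddCommGroup (n : ℕ) : AddCommGroup (GSp n) :=
  inferInstanceAs (AddCommGroup (Fin n → ℝ))

instance GSp.instModule (n : ℕ) : Module ℝ (GSp n) :=
  inferInstanceAs (Module ℝ (Fin n → ℝ))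

instance GSp.instFinite (n : ℕ) : Module.Finite ℝ (GSp n) :=
  inferInstanceAs (Module.Finite ℝ (Fin n → ℝ))

theorem gurarii_superIdeal_in_every_superspace
    (X : Type u) [NormedAddCommGroup X] [NormedSpace ℝ X] [CompleteSpace X]
    (hX : IsGurarii X) :
    ∀ (Y : Type v) [NormedAddCommGroup Y] [NormedSpace ℝ Y] [CompleteSpace Y],
      ∀ i : X →ₗᵢ[ℝ] Y, IsSuperIdeal (LinearMap.range i.toLinearMap) := by
  intro Y _ _ _ i ε hε E hE
  let φ : GSp (Module.finrank ℝ E) ≃ₗ[ℝ] E := (Module.finBasis ℝ E).equivFun.symm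
  letI N : NormedAddCommGroup (GSp (Module.finrank ℝ E)) :=
    NormedAddCommGroup.induced _ E φ.toLinearMap φ.injective
  letI : NormedSpace ℝ (GSp (Module.finrank ℝ E)) :=
    NormedSpace.induced ℝ _ E φ.toLinearMap
  have hn : ∀ x : GSp (Module.finrank ℝ E), ‖x‖ = ‖φ x‖ := fun _ => rfl
  let R := LinearMap.range i.toLinearMap
  let J : X ≃ₗᵢ[ℝ] R := i.equivRange
  let S : Subspace ℝ (GSp (Module.finrank ℝ E)) :=
    R.comap (E.subtype ∘ₗ φ.toLinearMap)
  let A : S →ₗ[ℝ] R :=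
    ((E.subtype ∘ₗ φ.toLinearMap) ∘ₗ S.subtype).codRestrict R (fun s => s.2)
  let A' : S →ₗᵢ[ℝ] R := ⟨A, fun s => rfl⟩
  obtain ⟨TF, h1, h2⟩ := hX ε hε (GSp (Module.finrank ℝ E)) S
    (J.symm.toLinearIsometry.comp A')
  refine ⟨J.toLinearEquiv.toLinearMap ∘ₗ TF ∘ₗ φ.symm.toLinearMap, ?_, ?_⟩
  · intro e he
    have hs : φ.symm e ∈ S := by
      change ((φ (φ.symm e) : E) : Y) ∈ R
      rw [φ.apply_symm_apply]; exact he
    have h := h1 ⟨φ.symm e, hs⟩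
    change ((J (TF (φ.symm e)) : R) : Y) = e
    have h' : TF (φ.symm e) = J.symm (A ⟨φ.symm e, hs⟩) := h
    rw [h', J.apply_symm_apply]
    change ((φ (φ.symm e) : E) : Y) = e
    rw [φ.apply_symm_apply]
  · intro e
    have h := h2 (φ.symm e)
    rw [hn, φ.apply_symm_apply] at h
    have h3 : ‖J (TF (φ.symm e))‖ = ‖TF (φ.symm e)‖ := J.norm_map _
    rw [← h3] at h
    exact h
end

section
/- A real Banach space X is a Lindenstrauss space (i.e., X* is isometrically isomorphic to L¹(μ) for some measure μ) if and only if X is an ideal in every superspace, i.e., for every Banach space Y and every linear isometric embedding i : X → Y, the subspace i(X) is an ideal in Y. -/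
universe u v

open Metric Set

section Helpers
open MeasureTheory Set Filter Topology
open scoped ENNReal NNReal CompactlySupported
open scoped symmDiff
universe w

section AbsFn
set_option linter.unusedSectionVars false
variable {K : Type*} [TopologicalSpace K] [CompactSpace K]

/-- The modulus of a functional on `C(K)`, evaluated at nonnegative functions. -/
noncomputable def absFn (F : C(K, ℝ) →L[ℝ] ℝ) (y : C(K, ℝ)) : ℝ :=
  sSup {r | ∃ z : C(K, ℝ), (∀ t, |z t| ≤ y t) ∧ r = F z}

lemma absFn_bdd (F : C(K, ℝ) →L[ℝ] ℝ) (y : C(K, ℝ)) :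
    BddAbove {r | ∃ z : C(K, ℝ), (∀ t, |z t| ≤ y t) ∧ r = F z} := by
  refine ⟨‖F‖ * ‖y‖, ?_⟩
  rintro r ⟨z, hz, rfl⟩
  refine (le_abs_self _).trans ((F.le_opNorm z).trans ?_)
  gcongr
  rw [ContinuousMap.norm_le _ (norm_nonneg _)]
  intro t
  exact (hz t).trans ((le_abs_self _).trans (y.norm_coe_le_norm t))

lemma le_absFn (F : C(K, ℝ) →L[ℝ] ℝ) (y z : C(K, ℝ)) (hz : ∀ t, |z t| ≤ y t) :
    F z ≤ absFn F y := le_csSup (absFn_bdd F y) ⟨z, hz, rfl⟩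

lemma absFn_le (F : C(K, ℝ) →L[ℝ] ℝ) (y : C(K, ℝ)) (hy : ∀ t, 0 ≤ y t) (c : ℝ)
    (h : ∀ z : C(K, ℝ), (∀ t, |z t| ≤ y t) → F z ≤ c) : absFn F y ≤ c := by
  refine csSup_le ⟨F 0, 0, by simpa using hy, rfl⟩ ?_
  rintro r ⟨z, hz, rfl⟩
  exact h z hz

lemma absFn_nonneg (F : C(K, ℝ) →L[ℝ] ℝ) (y : C(K, ℝ)) (hy : ∀ t, 0 ≤ y t) : 0 ≤ absFn F y := by
  simpa using le_absFn F y 0 (by simpa using hy)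

lemma abs_le_absFn (F : C(K, ℝ) →L[ℝ] ℝ) (y z : C(K, ℝ)) (hz : ∀ t, |z t| ≤ y t) :
    |F z| ≤ absFn F y := by
  rw [abs_le]
  constructor
  · have := le_absFn F y (-z) (by simpa using hz)
    rw [map_neg] at this; linarith
  · exact le_absFn F y z hz

lemma absFn_add (F : C(K, ℝ) →L[ℝ] ℝ) (y₁ y₂ : C(K, ℝ)) (h₁ : ∀ t, 0 ≤ y₁ t)
    (h₂ : ∀ t, 0 ≤ y₂ t) : absFn F (y₁ + y₂) = absFn F y₁ + absFn F y₂ := by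
  apply le_antisymm
  · refine absFn_le F _ (fun t => add_nonneg (h₁ t) (h₂ t)) _ ?_
    intro z hz
    set z₁ : C(K, ℝ) := (z ⊓ y₁) ⊔ (-y₁) with hz₁
    have e1 : ∀ t, z₁ t = max (min (z t) (y₁ t)) (- y₁ t) := fun t => by simp [hz₁]
    have : F z = F z₁ + F (z - z₁) := by rw [← map_add]; congr 1; abel
    rw [this]
    refine add_le_add (le_absFn F _ _ ?_) (le_absFn F _ _ ?_)
    · intro t; rw [e1, abs_le]
      have := h₁ t
      exact ⟨le_max_right _ _, max_le (min_le_right _ _) (by linarith)⟩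
    · intro t
      have a := h₁ t
      have b := h₂ t
      have c := hz t
      simp only [ContinuousMap.sub_apply, ContinuousMap.add_apply] at c ⊢
      rw [e1]
      rw [abs_le] at c ⊢
      rcases max_cases (min (z t) (y₁ t)) (- y₁ t) with h | h <;>
      rcases min_cases (z t) (y₁ t) with h' | h' <;> constructor <;> linarith
  · rw [← le_sub_iff_add_le]
    refine absFn_le F _ h₁ _ fun z₁ hz₁ => ?_
    rw [le_sub_iff_add_le, ← le_sub_iff_add_le']
    refine absFn_le F _ h₂ _ fun z₂ hz₂ => ?_
    rw [le_sub_iff_add_le', ← map_add]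
    exact le_absFn F _ _ fun t => (abs_add_le _ _).trans (add_le_add (hz₁ t) (hz₂ t))

lemma absFn_smul (F : C(K, ℝ) →L[ℝ] ℝ) (c : ℝ) (hc : 0 ≤ c) (y : C(K, ℝ)) (h : ∀ t, 0 ≤ y t) :
    absFn F (c • y) = c * absFn F y := by
  rcases hc.eq_or_lt with rfl | hc
  · rw [zero_smul, zero_mul]
    refine le_antisymm (absFn_le _ _ (by simp) _ ?_) (absFn_nonneg _ _ (by simp))
    intro z hz
    have : z = 0 := by ext t; simpa using hz t
    simp [this]
  · apply le_antisymm
    · refine absFn_le F _ (fun t => by simpa using mul_nonneg hc.le (h t)) _ fun z hz => ?_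
      rw [← div_le_iff₀' hc]
      have := le_absFn F y (c⁻¹ • z) (fun t => ?_)
      · rw [map_smul, smul_eq_mul] at this; rwa [div_eq_inv_mul]
      · have := hz t
        simp only [ContinuousMap.smul_apply, smul_eq_mul, abs_mul, abs_inv, abs_of_pos hc] at this ⊢
        rwa [← div_eq_inv_mul, div_le_iff₀' hc]
    · rw [← le_div_iff₀' hc]
      refine absFn_le F _ h _ fun z hz => ?_
      rw [le_div_iff₀' hc, ← smul_eq_mul, ← map_smul]
      refine le_absFn F _ _ fun t => ?_
      simp only [ContinuousMap.smul_apply, smul_eq_mul, abs_mul, abs_of_pos hc]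
      exact mul_le_mul_of_nonneg_left (hz t) hc.le

lemma absFn_one (F : C(K, ℝ) →L[ℝ] ℝ) : absFn F 1 = ‖F‖ := by
  apply le_antisymm
  · refine absFn_le F _ (by simp) _ fun z hz => (le_abs_self _).trans ?_
    refine (F.le_opNorm z).trans (mul_le_of_le_one_right (norm_nonneg _) ?_)
    rw [ContinuousMap.norm_le _ zero_le_one]
    exact hz
  · refine F.opNorm_le_bound (absFn_nonneg _ _ (by simp)) fun z => ?_
    rw [mul_comm, ← absFn_smul F _ (norm_nonneg z) _ (by simp)]
    exact abs_le_absFn F _ z fun t => by simpa using z.norm_coe_le_norm t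

lemma absFn_add_le (A B : C(K, ℝ) →L[ℝ] ℝ) (y : C(K, ℝ)) (h : ∀ t, 0 ≤ y t) :
    absFn (A + B) y ≤ absFn A y + absFn B y :=
  absFn_le _ _ h _ fun z hz => add_le_add (le_absFn A y z hz) (le_absFn B y z hz)

/-- Norm-additive splittings are dominated by the modulus. -/
lemma absFn_le_of_split (A B : C(K, ℝ) →L[ℝ] ℝ) (hn : ‖A‖ + ‖B‖ ≤ ‖A + B‖) (y : C(K, ℝ))
    (h : ∀ t, 0 ≤ y t) : absFn A y ≤ absFn (A + B) y := by
  set c := ‖y‖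
  have hc : ∀ t, 0 ≤ (c • (1 : C(K, ℝ)) - y) t := fun t => by
    have := (le_abs_self _).trans (y.norm_coe_le_norm t)
    simpa using this
  have e : c • (1 : C(K, ℝ)) = y + (c • 1 - y) := by abel
  have key : ∀ G : C(K, ℝ) →L[ℝ] ℝ, absFn G y + absFn G (c • 1 - y) = c * ‖G‖ := fun G => by
    rw [← absFn_add _ _ _ h hc, ← e, absFn_smul _ _ (norm_nonneg _) _ (by simp), absFn_one]
  have h1 := key A
  have h2 := key B
  have h3 := key (A + B)
  have h4 := absFn_add_le A B (c • 1 - y) hc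
  have h5 := absFn_nonneg B y h
  have h6 : c * (‖A‖ + ‖B‖) ≤ c * ‖A + B‖ := mul_le_mul_of_nonneg_left hn (norm_nonneg _)
  nlinarith
end AbsFn

section RMK
variable {K : Type*} [TopologicalSpace K] [CompactSpace K] [T2Space K] [MeasurableSpace K]
  [BorelSpace K]

/-- from nonneg functions to continuous maps -/
def nnToC (y : C_c(K, ℝ≥0)) : C(K, ℝ) := ⟨fun t => (y t : ℝ), by fun_prop⟩

lemma exists_measure_absFn (F : C(K, ℝ) →L[ℝ] ℝ) :
    ∃ μ : Measure K, IsFiniteMeasure μ ∧ μ.Regular ∧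
      ∀ y : C(K, ℝ), (∀ t, 0 ≤ y t) → ∫ t, y t ∂μ = absFn F y := by
  let Λ : C_c(K, ℝ≥0) →ₗ[ℝ≥0] ℝ≥0 :=
    { toFun := fun y => Real.toNNReal (absFn F (nnToC y))
      map_add' := fun y z => by
        have : nnToC (y + z) = nnToC y + nnToC z := by ext t; simp [nnToC]
        rw [this, absFn_add _ _ _ (fun t => (y t).coe_nonneg) (fun t => (z t).coe_nonneg)]
        exact Real.toNNReal_add (absFn_nonneg _ _ fun t => (y t).coe_nonneg)
          (absFn_nonneg _ _ fun t => (z t).coe_nonneg)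
      map_smul' := fun c y => by
        have : nnToC (c • y) = (c : ℝ) • nnToC y := by ext t; simp [nnToC]
        rw [this, absFn_smul F c c.coe_nonneg (nnToC y) (fun t => (y t).coe_nonneg),
          Real.toNNReal_mul c.coe_nonneg]
        simp }
  have hreg := NNRealRMK.rieszMeasure_regular Λ
  have hfin : IsFiniteMeasure (NNRealRMK.rieszMeasure Λ) :=
    ⟨IsCompact.measure_lt_top isCompact_univ⟩
  refine ⟨NNRealRMK.rieszMeasure Λ, hfin, hreg, fun y hy => ?_⟩
  let y' : C_c(K, ℝ≥0) := ⟨⟨fun t => (y t).toNNReal, by fun_prop⟩,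
    HasCompactSupport.of_compactSpace _⟩
  have := NNRealRMK.integral_rieszMeasure Λ y'
  have e0 : ∀ t, ((y' t : ℝ≥0) : ℝ) = y t := fun t => Real.coe_toNNReal _ (hy t)
  have e : nnToC y' = y := by ext t; exact e0 t
  have e2 : ((Λ y' : ℝ≥0) : ℝ) = absFn F (nnToC y') :=
    Real.coe_toNNReal _ (absFn_nonneg _ _ fun t => (y' t).coe_nonneg)
  rw [e2, e] at this
  simpa only [e0] using this

end RMK


section Jm
set_option linter.unusedSectionVars false
variable {K : Type*} [TopologicalSpace K] [CompactSpace K] [T2Space K] [MeasurableSpace K]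
  [BorelSpace K] (μ : Measure K) [IsFiniteMeasure μ]

lemma C_integrable (y : C(K, ℝ)) : Integrable (fun t => y t) μ :=
  y.continuous.integrable_of_hasCompactSupport (HasCompactSupport.of_compactSpace _)

lemma integrable_mul_C {g : K → ℝ} (hg : Integrable g μ) (y : C(K, ℝ)) :
    Integrable (fun t => g t * y t) μ := by
  refine hg.mul_bdd (c := ‖y‖) y.continuous.aestronglyMeasurable ?_
  exact Eventually.of_forall fun t => y.norm_coe_le_norm t

lemma abs_integral_mul_C_le {g : K → ℝ} (hg : Integrable g μ) (y : C(K, ℝ)) :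
    |∫ t, g t * y t ∂μ| ≤ (∫ t, |g t| ∂μ) * ‖y‖ := by
  refine abs_integral_le_integral_abs.trans ?_
  rw [← integral_mul_const]
  refine integral_mono (integrable_mul_C μ hg y).abs (hg.abs.mul_const _) fun t => ?_
  simp only [abs_mul]
  exact mul_le_mul_of_nonneg_left (y.norm_coe_le_norm t) (abs_nonneg _)

/-- Densities act as functionals on `C(K)`. -/
noncomputable def JmL : Lp ℝ 1 μ →L[ℝ] (C(K, ℝ) →L[ℝ] ℝ) :=
  LinearMap.mkContinuous₂
    (LinearMap.mk₂ ℝ (fun (g : Lp ℝ 1 μ) (y : C(K, ℝ)) => ∫ t, g t * y t ∂μ)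
      (fun g g' y => by
        rw [← integral_add (integrable_mul_C μ (L1.integrable_coeFn g) y)
          (integrable_mul_C μ (L1.integrable_coeFn g') y)]
        refine integral_congr_ae ?_
        filter_upwards [Lp.coeFn_add g g'] with t ht
        rw [ht, Pi.add_apply, add_mul])
      (fun c g y => by
        rw [smul_eq_mul, ← integral_const_mul]
        refine integral_congr_ae ?_
        filter_upwards [Lp.coeFn_smul c g] with t ht
        simp [ht, mul_assoc])
      (fun g y y' => by
        rw [← integral_add (integrable_mul_C μ (L1.integrable_coeFn g) y)
          (integrable_mul_C μ (L1.integrable_coeFn g) y')]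
        simp [mul_add])
      (fun c g y => by
        rw [smul_eq_mul, ← integral_const_mul]
        congr 1; ext t; simp; ring))
    1 (fun g y => by
      rw [one_mul, L1.norm_eq_integral_norm]
      exact abs_integral_mul_C_le μ (L1.integrable_coeFn g) y)

lemma JmL_apply (g : Lp ℝ 1 μ) (y : C(K, ℝ)) : JmL μ g y = ∫ t, g t * y t ∂μ := rfl

lemma JmL_norm [μ.Regular] (g : Lp ℝ 1 μ) : ‖JmL μ g‖ = ‖g‖ := by
  have hd : DenseRange (ContinuousMap.toLp (E := ℝ) 1 μ ℝ) :=
    ContinuousMap.toLp_denseRange ℝ μ ℝ (by simp)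
  have hc : Continuous (fun b : Lp ℝ 1 μ => ‖JmL μ b‖) :=
    (continuous_norm (E := C(K, ℝ) →L[ℝ] ℝ)).comp (JmL μ).continuous
  refine hd.induction_on (p := fun g => ‖JmL μ g‖ = ‖g‖) g
    (isClosed_eq hc continuous_norm) ?_
  intro u
  set g := ContinuousMap.toLp (E := ℝ) 1 μ ℝ u with hg
  have hgu : g =ᵐ[μ] u := ContinuousMap.coeFn_toLp μ u
  have hnorm : ‖g‖ = ∫ t, |u t| ∂μ := by
    rw [L1.norm_eq_integral_norm]
    refine integral_congr_ae ?_
    filter_upwards [hgu] with t ht using by simp [ht]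
  apply le_antisymm
  · refine ContinuousLinearMap.opNorm_le_bound _ (norm_nonneg _) fun y => ?_
    rw [L1.norm_eq_integral_norm]
    exact abs_integral_mul_C_le μ (L1.integrable_coeFn g) y
  · have key : ∀ δ : ℝ, 0 < δ → ‖g‖ ≤ ‖JmL μ g‖ + δ * μ.real univ := by
      intro δ hδ
      have hpos : ∀ t, 0 < |u t| + δ := fun t => by positivity
      let y : C(K, ℝ) := ⟨fun t => u t / (|u t| + δ),
        by refine Continuous.div (by fun_prop) (by fun_prop) fun t => (hpos t).ne'⟩
      have hy : ‖y‖ ≤ 1 := by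
        rw [ContinuousMap.norm_le _ zero_le_one]
        intro t
        simp only [y, ContinuousMap.coe_mk, Real.norm_eq_abs, abs_div, abs_of_pos (hpos t)]
        rw [div_le_one (hpos t)]; linarith
      have h1 : JmL μ g y ≤ ‖JmL μ g‖ :=
        (le_abs_self _).trans (((JmL μ g).le_opNorm y).trans
          (mul_le_of_le_one_right (norm_nonneg _) hy))
      have h2 : JmL μ g y = ∫ t, u t * y t ∂μ := by
        rw [JmL_apply]
        refine integral_congr_ae ?_
        filter_upwards [hgu] with t ht using by simp [ht]
      have h3 : ∫ t, (|u t| - δ) ∂μ ≤ ∫ t, u t * y t ∂μ := by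
        refine integral_mono ((C_integrable μ u).abs.sub (integrable_const _))
          (integrable_mul_C μ (C_integrable μ u) y) fun t => ?_
        simp only [y, ContinuousMap.coe_mk]
        rw [mul_div_assoc', le_div_iff₀ (hpos t), ← abs_mul_abs_self (u t)]
        nlinarith [abs_nonneg (u t)]
      rw [integral_sub (C_integrable μ u).abs (integrable_const _), integral_const, smul_eq_mul] at h3
      rw [hnorm]; linarith
    have : Tendsto (fun δ : ℝ => ‖JmL μ g‖ + δ * μ.real univ) (𝓝[>] 0) (𝓝 (‖JmL μ g‖ + 0 * μ.real univ)) := by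
      refine Tendsto.mono_left ?_ nhdsWithin_le_nhds
      exact (continuous_const.add (continuous_id.mul continuous_const)).tendsto 0
    simp only [zero_mul, add_zero] at this
    exact ge_of_tendsto this (eventually_mem_nhdsWithin.mono fun δ hδ => key δ hδ)

lemma exists_density [μ.Regular] (G : C(K, ℝ) →L[ℝ] ℝ) (hG : ∀ y : C(K, ℝ), |G y| ≤ ∫ t, |y t| ∂μ) :
    ∃ g : K → ℝ, Measurable g ∧ (∀ t, |g t| ≤ 1) ∧ ∀ y : C(K, ℝ), G y = ∫ t, g t * y t ∂μ := by
  let e := ContinuousMap.toLp (E := ℝ) 1 μ ℝ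
  have hd : DenseRange e := ContinuousMap.toLp_denseRange ℝ μ ℝ (by simp)
  have he : ∀ y, ‖G y‖ ≤ 1 * ‖e y‖ := by
    intro y
    rw [one_mul, L1.norm_eq_integral_norm]
    refine (hG y).trans (le_of_eq (integral_congr_ae ?_))
    filter_upwards [ContinuousMap.coeFn_toLp (p := 1) (𝕜 := ℝ) μ y] with t ht
    rw [Real.norm_eq_abs, ht]
  let G1 : Lp ℝ 1 μ →L[ℝ] ℝ := (G : C(K, ℝ) →ₗ[ℝ] ℝ).extendOfNorm (e : C(K, ℝ) →ₗ[ℝ] Lp ℝ 1 μ)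
  have hG1 : ∀ y, G1 (e y) = G y := fun y => LinearMap.extendOfNorm_eq hd ⟨1, he⟩ y
  have hG1n : ∀ u, |G1 u| ≤ ‖u‖ := fun u => by
    simpa using LinearMap.norm_extendOfNorm_apply_le hd 1 he u
  have hle : (1 : ℝ≥0∞) ≤ 2 := by norm_num
  let incl : Lp ℝ 2 μ →ₗ[ℝ] Lp ℝ 1 μ :=
    { toFun := fun u => ((Lp.memLp u).mono_exponent hle).toLp u
      map_add' := fun u v => by
        rw [← MemLp.toLp_add]
        exact MemLp.toLp_congr _ _ (Lp.coeFn_add u v)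
      map_smul' := fun c u => by
        rw [RingHom.id_apply, ← MemLp.toLp_const_smul]
        exact MemLp.toLp_congr _ _ (Lp.coeFn_smul c u) }
  have hinc : ∀ u, incl u =ᵐ[μ] u := fun u =>
    MemLp.coeFn_toLp ((Lp.memLp u).mono_exponent hle)
  obtain ⟨C, hC⟩ : ∃ C : ℝ, ∀ u, ‖incl u‖ ≤ C * ‖u‖ := by
    refine ⟨((μ univ) ^ ((1:ℝ) / 1 - 1/2)).toReal, fun u => ?_⟩
    have := eLpNorm_le_eLpNorm_mul_rpow_measure_univ hle (Lp.aestronglyMeasurable u)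
    change ‖((Lp.memLp u).mono_exponent hle).toLp u‖ ≤ _
    rw [Lp.norm_toLp, Lp.norm_def, ← ENNReal.toReal_mul, mul_comm]
    refine ENNReal.toReal_mono (ENNReal.mul_ne_top (Lp.eLpNorm_ne_top u) ?_) (by simpa using this)
    exact ENNReal.rpow_ne_top_of_nonneg (by norm_num) (measure_ne_top _ _)
  let incL : Lp ℝ 2 μ →L[ℝ] Lp ℝ 1 μ := incl.mkContinuous C hC
  let g0 : Lp ℝ 2 μ := (InnerProductSpace.toDual ℝ (Lp ℝ 2 μ)).symm (G1.comp incL)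
  have hg0 : ∀ u : Lp ℝ 2 μ, G1 (incl u) = ∫ t, g0 t * u t ∂μ := by
    intro u
    have : inner ℝ g0 u = G1 (incl u) := InnerProductSpace.toDual_symm_apply
    rw [← this, L2.inner_def]
    congr 1; ext t; simp [mul_comm]
  have hg0i : Integrable g0 μ := (Lp.memLp g0).integrable hle
  have hset : ∀ s, MeasurableSet s → |∫ t in s, g0 t ∂μ| ≤ μ.real s := by
    intro s hs
    have h1 := hg0 (indicatorConstLp 2 hs (measure_ne_top _ _) (1 : ℝ))
    have h2 : ∫ t, g0 t * (indicatorConstLp 2 hs (measure_ne_top _ _) (1 : ℝ) : Lp ℝ 2 μ) t ∂μ = ∫ t in s, g0 t ∂μ := by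
      rw [← integral_indicator hs]
      refine integral_congr_ae ?_
      filter_upwards [indicatorConstLp_coeFn (p := 2) (hs := hs) (hμs := measure_ne_top μ s) (c := (1:ℝ))] with t ht
      rw [ht]; by_cases h : t ∈ s <;> simp [h]
    have h3 : incl (indicatorConstLp 2 hs (measure_ne_top _ _) (1 : ℝ)) = indicatorConstLp 1 hs (measure_ne_top _ _) (1 : ℝ) := by
      apply Lp.ext
      exact (hinc _).trans (indicatorConstLp_coeFn.trans indicatorConstLp_coeFn.symm)
    rw [← h2, ← h1, h3]
    refine (hG1n _).trans ?_
    rw [norm_indicatorConstLp (by simp) (by simp)]; simp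
  have hle1 : ∀ᵐ t ∂μ, g0 t ≤ 1 := by
    refine ae_le_of_forall_setIntegral_le hg0i (integrable_const 1) fun s hs _ => ?_
    simpa using (le_abs_self _).trans (hset s hs)
  have hge1 : ∀ᵐ t ∂μ, -1 ≤ g0 t := by
    refine ae_le_of_forall_setIntegral_le (integrable_const (-1)) hg0i fun s hs _ => ?_
    have := (abs_le.1 (hset s hs)).1
    simpa using this
  obtain ⟨g', hg'm, hg'⟩ := (Lp.aestronglyMeasurable g0).aemeasurable
  refine ⟨fun t => max (-1) (min 1 (g' t)), by fun_prop, fun t => abs_le.2 ⟨le_max_left _ _, max_le (by norm_num) (min_le_left _ _)⟩, fun y => ?_⟩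
  have h4 : incl (ContinuousMap.toLp (E := ℝ) 2 μ ℝ y) = e y := by
    apply Lp.ext
    exact (hinc _).trans ((ContinuousMap.coeFn_toLp μ y).trans (ContinuousMap.coeFn_toLp μ y).symm)
  rw [← hG1, ← h4, hg0]
  refine integral_congr_ae ?_
  filter_upwards [hg', hle1, hge1, ContinuousMap.coeFn_toLp (p := 2) (𝕜 := ℝ) μ y] with t h1 h2 h3 h5
  rw [h5, ← h1, min_eq_right h2, max_eq_right h3]

end Jm


/-- Metric disjointness (L-orthogonality). -/
def LDisj {Z : Type*} [NormedAddCommGroup Z] (A B : Z) : Prop :=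
  ‖A + B‖ = ‖A‖ + ‖B‖ ∧ ‖A - B‖ = ‖A‖ + ‖B‖

lemma L1_ldisj_of_mul {Ω : Type*} [MeasurableSpace Ω] {μ : Measure Ω} (u v : Lp ℝ 1 μ)
    (h : ∀ᵐ t ∂μ, u t * v t = 0) : LDisj u v := by
  constructor
  all_goals
    rw [L1.norm_eq_integral_norm, L1.norm_eq_integral_norm, L1.norm_eq_integral_norm,
      ← integral_add (L1.integrable_coeFn u).norm (L1.integrable_coeFn v).norm]
    refine integral_congr_ae ?_
    filter_upwards [h, Lp.coeFn_add u v, Lp.coeFn_sub u v] with t ht h1 h2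
    rcases mul_eq_zero.1 ht with h | h <;> simp only [h1, h2, Pi.add_apply, Pi.sub_apply, h] <;> simp

lemma LDisj.map {Z Z' : Type*} [NormedAddCommGroup Z] [NormedSpace ℝ Z] [NormedAddCommGroup Z']
    [NormedSpace ℝ Z'] (J : Z →ₗᵢ[ℝ] Z') {a b : Z} : LDisj (J a) (J b) ↔ LDisj a b := by
  simp only [LDisj, ← map_add, ← map_sub, LinearIsometry.norm_map]

section ZF
set_option linter.unusedSectionVars false
variable {K : Type*} [TopologicalSpace K] [CompactSpace K] [T2Space K] [MeasurableSpace K]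
  [BorelSpace K]

/-- `JmL` as a linear isometry -/
noncomputable def Jm (μ : Measure K) [IsFiniteMeasure μ] [μ.Regular] :
    Lp ℝ 1 μ →ₗᵢ[ℝ] (C(K, ℝ) →L[ℝ] ℝ) :=
  ⟨(JmL μ : Lp ℝ 1 μ →ₗ[ℝ] (C(K, ℝ) →L[ℝ] ℝ)), JmL_norm μ⟩

lemma Jm_apply (μ : Measure K) [IsFiniteMeasure μ] [μ.Regular] (g : Lp ℝ 1 μ) (y : C(K, ℝ)) :
    Jm μ g y = ∫ t, g t * y t ∂μ := rfl

lemma Jm_eq (μ : Measure K) [IsFiniteMeasure μ] [μ.Regular] (g : Lp ℝ 1 μ) (f : K → ℝ)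
    (h : g =ᵐ[μ] f) (y : C(K, ℝ)) :
    Jm μ g y = ∫ t, f t * y t ∂μ := by
  rw [Jm_apply]
  refine integral_congr_ae ?_
  filter_upwards [h] with t ht
  rw [ht]

lemma exists_Lp_density (μ : Measure K) [IsFiniteMeasure μ] [μ.Regular] (G : C(K, ℝ) →L[ℝ] ℝ)
    (hG : ∀ y : C(K, ℝ), |G y| ≤ ∫ t, |y t| ∂μ) : ∃ g : Lp ℝ 1 μ, Jm μ g = G := by
  obtain ⟨g, hm, hb, hg⟩ := exists_density μ G hG
  have hi : Integrable g μ := Integrable.of_bound hm.aestronglyMeasurable 1 (ae_of_all _ hb)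
  refine ⟨hi.toL1 g, ?_⟩
  ext y
  rw [Jm_eq μ _ g hi.coeFn_toL1, hg]

lemma absC_dom (μ : Measure K) (F A : C(K, ℝ) →L[ℝ] ℝ)
    (hμ : ∀ y : C(K, ℝ), (∀ t, 0 ≤ y t) → ∫ t, y t ∂μ = absFn F y)
    (hA : ∀ y : C(K, ℝ), (∀ t, 0 ≤ y t) → absFn A y ≤ absFn F y)
    (y : C(K, ℝ)) : |A y| ≤ ∫ t, |y t| ∂μ := by
  have h1 := abs_le_absFn A |y| y (fun t => by simp)
  have h2 := hA |y| (fun t => by simp)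
  have h3 := hμ |y| (fun t => by simp)
  simp only [ContinuousMap.coe_abs, Pi.abs_apply] at h3
  linarith

lemma exists_polar (F : C(K, ℝ) →L[ℝ] ℝ) :
    ∃ (μ : Measure K) (_ : IsFiniteMeasure μ) (_ : μ.Regular) (θ : K → ℝ),
      Measurable θ ∧ (∀ t, |θ t| = 1) ∧ μ.real univ = ‖F‖ ∧
      (∀ y : C(K, ℝ), F y = ∫ t, θ t * y t ∂μ) ∧
      (∀ y : C(K, ℝ), |F y| ≤ ∫ t, |y t| ∂μ) ∧
      (∀ A B : C(K, ℝ) →L[ℝ] ℝ, A + B = F → ‖A‖ + ‖B‖ ≤ ‖F‖ →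
        ∀ y : C(K, ℝ), |A y| ≤ ∫ t, |y t| ∂μ) := by
  obtain ⟨μ, hfin, hreg, hμ⟩ := exists_measure_absFn F
  have hdom := absC_dom μ F F hμ (fun _ _ => le_rfl)
  obtain ⟨θ, hm, hb, hθ⟩ := exists_density μ F hdom
  have hn : μ.real univ = ‖F‖ := by
    have := hμ 1 (by simp)
    rw [absFn_one] at this
    simpa using this
  have hi : Integrable θ μ := Integrable.of_bound hm.aestronglyMeasurable 1 (ae_of_all _ hb)
  have hF : Jm μ (hi.toL1 θ) = F := by
    ext y
    rw [Jm_eq μ _ θ hi.coeFn_toL1, hθ]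
  have hFn : ∫ t, |θ t| ∂μ = ∫ t, (1 : ℝ) ∂μ := by
    have : ‖Jm μ (hi.toL1 θ)‖ = ∫ t, |θ t| ∂μ := by
      rw [LinearIsometry.norm_map, L1.norm_of_fun_eq_integral_norm]; rfl
    rw [← this, hF, ← hn]; simp
  have hae : ∀ᵐ t ∂μ, |θ t| = 1 :=
    (integral_eq_iff_of_ae_le hi.abs (integrable_const _) (ae_of_all _ hb)).1 hFn
  refine ⟨μ, hfin, hreg, fun t => if |θ t| = 1 then θ t else 1, ?_, ?_, hn, ?_, hdom, ?_⟩
  · exact Measurable.ite (measurableSet_eq_fun (by fun_prop) (by fun_prop)) hm measurable_const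
  · intro t; by_cases h : |θ t| = 1 <;> simp [h]
  · intro y
    rw [hθ]
    refine integral_congr_ae ?_
    filter_upwards [hae] with t ht
    simp [ht]
  · rintro A B rfl hAB
    exact absC_dom μ (A + B) A hμ (absFn_le_of_split A B hAB)

theorem Z_common (G₁ G₂ G₃ : C(K, ℝ) →L[ℝ] ℝ) :
    ∃ (μ : Measure K) (J : Lp ℝ 1 μ →ₗᵢ[ℝ] (C(K, ℝ) →L[ℝ] ℝ)) (g₁ g₂ g₃ : Lp ℝ 1 μ),
      J g₁ = G₁ ∧ J g₂ = G₂ ∧ J g₃ = G₃ := by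
  obtain ⟨μ₁, _, _, -, -, -, -, -, h₁, -⟩ := exists_polar G₁
  obtain ⟨μ₂, _, _, -, -, -, -, -, h₂, -⟩ := exists_polar G₂
  obtain ⟨μ₃, _, _, -, -, -, -, -, h₃, -⟩ := exists_polar G₃
  let μ := μ₁ + μ₂ + μ₃
  have hI : μ.InnerRegular := inferInstance
  have hreg : μ.Regular := inferInstance
  have hs : ∀ y : C(K, ℝ), ∫ t, |y t| ∂μ = ∫ t, |y t| ∂μ₁ + ∫ t, |y t| ∂μ₂ + ∫ t, |y t| ∂μ₃ := by
    intro y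
    have i₁ := (C_integrable μ₁ y).abs
    have i₂ := (C_integrable μ₂ y).abs
    have i₃ := (C_integrable μ₃ y).abs
    rw [integral_add_measure (i₁.add_measure i₂) i₃, integral_add_measure i₁ i₂]
  have hp : ∀ (ν : Measure K) (y : C(K, ℝ)), 0 ≤ ∫ t, |y t| ∂ν := fun ν y =>
    integral_nonneg fun t => abs_nonneg _
  obtain ⟨g₁, e₁⟩ := exists_Lp_density μ G₁ fun y => by
    rw [hs]; linarith [h₁ y, hp μ₂ y, hp μ₃ y]
  obtain ⟨g₂, e₂⟩ := exists_Lp_density μ G₂ fun y => by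
    rw [hs]; linarith [h₂ y, hp μ₁ y, hp μ₃ y]
  obtain ⟨g₃, e₃⟩ := exists_Lp_density μ G₃ fun y => by
    rw [hs]; linarith [h₃ y, hp μ₁ y, hp μ₂ y]
  exact ⟨μ, Jm μ, g₁, g₂, g₃, e₁, e₂, e₃⟩

/-- multiplication by a unimodular function on `L¹`. -/
noncomputable def mulIso {Ω : Type*} [MeasurableSpace Ω] (μ : Measure Ω) (θ : Ω → ℝ)
    (hm : Measurable θ) (hθ : ∀ t, |θ t| = 1) : Lp ℝ 1 μ →ₗᵢ[ℝ] Lp ℝ 1 μ where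
  toFun k := Integrable.toL1 (fun t => k t * θ t)
    ((L1.integrable_coeFn k).mul_bdd (c := 1) hm.aestronglyMeasurable
      (ae_of_all _ fun t => (hθ t).le))
  map_add' k l := by
    rw [← Integrable.toL1_add, Integrable.toL1_eq_toL1_iff]
    filter_upwards [Lp.coeFn_add k l] with t ht
    simp only [ht, Pi.add_apply, add_mul]
  map_smul' c k := by
    rw [RingHom.id_apply, ← Integrable.toL1_smul', Integrable.toL1_eq_toL1_iff]
    filter_upwards [Lp.coeFn_smul c k] with t ht
    simp only [ht, Pi.smul_apply, smul_eq_mul, mul_assoc]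
  norm_map' k := by
    change ‖Integrable.toL1 (fun t => k t * θ t)
      ((L1.integrable_coeFn k).mul_bdd (c := 1) hm.aestronglyMeasurable
      (ae_of_all _ fun t => (hθ t).le))‖ = _
    rw [L1.norm_of_fun_eq_integral_norm, L1.norm_eq_integral_norm]
    simp [hθ]

lemma mulIso_coe {Ω : Type*} [MeasurableSpace Ω] (μ : Measure Ω) (θ : Ω → ℝ)
    (hm : Measurable θ) (hθ : ∀ t, |θ t| = 1) (k : Lp ℝ 1 μ) :
    mulIso μ θ hm hθ k =ᵐ[μ] fun t => k t * θ t :=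
  Integrable.coeFn_toL1 ((L1.integrable_coeFn k).mul_bdd (c := 1) hm.aestronglyMeasurable
      (ae_of_all _ fun t => (hθ t).le))

theorem Z_rep (F : C(K, ℝ) →L[ℝ] ℝ) :
    ∃ (ν : Measure K) (_ : IsFiniteMeasure ν) (W : Lp ℝ 1 ν →ₗᵢ[ℝ] (C(K, ℝ) →L[ℝ] ℝ)),
      W (Lp.const 1 ν 1) = F ∧
      (∀ A B, A + B = F → ‖A‖ + ‖B‖ ≤ ‖F‖ → ∃ a, 0 ≤ a ∧ W a = A) ∧
      (∀ G, ∃ k, LDisj (G - W k) F) := by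
  obtain ⟨μ, _, _, θ, hm, hθ, hn, hF, hdom, hspl⟩ := exists_polar F
  have hθθ : ∀ t, θ t * θ t = 1 := fun t => by rw [← abs_mul_abs_self, hθ, one_mul]
  let W := (Jm μ).comp (mulIso μ θ hm hθ)
  have hW : ∀ k y, W k y = ∫ t, k t * θ t * y t ∂μ := fun k y =>
    Jm_eq μ _ _ (mulIso_coe μ θ hm hθ k) y
  have hW1 : W (Lp.const 1 μ 1) = F := by
    ext y
    rw [hW, hF]
    refine integral_congr_ae ?_
    filter_upwards [Lp.coeFn_const (p := 1) (μ := μ) (1 : ℝ)] with t ht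
    rw [ht, Function.const_apply, one_mul]
  refine ⟨μ, inferInstance, W, hW1, ?_, ?_⟩
  · intro A B hAB hABn
    obtain ⟨a, ha⟩ := exists_Lp_density μ A (hspl A B hAB hABn)
    obtain ⟨b, hb⟩ := exists_Lp_density μ B (hspl B A (by rw [add_comm, hAB]) (by linarith))
    have hab : mulIso μ θ hm hθ (Lp.const 1 μ 1) = a + b := by
      apply (Jm μ).injective
      rw [map_add, ha, hb, hAB]; exact hW1
    have hab2 : ∀ᵐ t ∂μ, a t + b t = θ t := by
      filter_upwards [Lp.coeFn_add a b, Lp.coeFn_const (p := 1) (μ := μ) (1 : ℝ),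
        mulIso_coe μ θ hm hθ (Lp.const 1 μ 1)] with t h1 h2 h3
      rw [hab, h1, h2] at h3
      simpa using h3
    have hia := L1.integrable_coeFn a
    have hib := L1.integrable_coeFn b
    have hintg : ∫ t, (|a t| + |b t|) ∂μ ≤ ∫ t, (1 : ℝ) ∂μ := by
      rw [integral_add hia.abs hib.abs]
      have e1 : ∫ t, |a t| ∂μ = ‖A‖ := by
        rw [← ha, LinearIsometry.norm_map, L1.norm_eq_integral_norm]; rfl
      have e2 : ∫ t, |b t| ∂μ = ‖B‖ := by
        rw [← hb, LinearIsometry.norm_map, L1.norm_eq_integral_norm]; rfl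
      rw [e1, e2]; simpa [hn] using hABn
    have hle : (fun _ => (1:ℝ)) ≤ᵐ[μ] fun t => |a t| + |b t| := by
      filter_upwards [hab2] with t ht
      rw [← hθ t, ← ht]; exact abs_add_le _ _
    have heq := (integral_eq_iff_of_ae_le (integrable_const _) (hia.abs.add hib.abs) hle).1
      (le_antisymm (integral_mono_ae (integrable_const _) (hia.abs.add hib.abs) hle) hintg)
    refine ⟨mulIso μ θ hm hθ a, ?_, ?_⟩
    · rw [← Lp.coeFn_nonneg]
      filter_upwards [heq, hab2, mulIso_coe μ θ hm hθ a] with t h1 h2 h3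
      rw [h3]
      simp only [Pi.zero_apply]
      rcases eq_or_eq_neg_of_abs_eq (hθ t) with h | h <;> rw [h] at h2 ⊢ <;>
      rcases abs_cases (a t) with h4 | h4 <;> rcases abs_cases (b t) with h5 | h5 <;>
        simp only [Pi.add_apply] at h1 <;> linarith
    · rw [← ha]
      change Jm μ (mulIso μ θ hm hθ (mulIso μ θ hm hθ a)) = _
      congr 1
      apply Lp.ext
      filter_upwards [mulIso_coe μ θ hm hθ a, mulIso_coe μ θ hm hθ (mulIso μ θ hm hθ a)] with t h1 h2
      rw [h2, h1, mul_assoc, hθθ, mul_one]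
  · intro G
    obtain ⟨μ', _, _, -, -, -, -, -, hG, -⟩ := exists_polar G
    let ρ := μ + μ'
    have hI : ρ.InnerRegular := inferInstance
    have hreg : ρ.Regular := inferInstance
    have hac : μ ≪ ρ := Measure.absolutelyContinuous_of_le (Measure.le_add_right le_rfl)
    obtain ⟨g, hg⟩ := exists_Lp_density ρ G fun y => by
      rw [integral_add_measure (C_integrable μ y).abs (C_integrable μ' y).abs]
      have : 0 ≤ ∫ t, |y t| ∂μ := integral_nonneg fun t => abs_nonneg _
      linarith [hG y]
    let d : K → ℝ := fun t => (μ.rnDeriv ρ t).toReal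
    have hd : Measurable d := (Measure.measurable_rnDeriv μ ρ).ennreal_toReal
    let S : Set K := {t | d t ≠ 0}
    have hS : MeasurableSet S := (measurableSet_eq_fun hd measurable_const).compl
    have hgi := L1.integrable_coeFn g
    let k0 : K → ℝ := fun t => θ t * g t / d t
    have hdk : ∀ t, d t * (k0 t * θ t) = S.indicator g t := by
      intro t
      by_cases h : d t = 0
      · simp [S, h]
      · rw [Set.indicator_of_mem (show t ∈ S from h)]
        simp only [k0]
        field_simp
        rw [pow_two, hθθ, one_mul]
    have hdk' : ∀ t, d t * k0 t = S.indicator g t * θ t := by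
      intro t
      rw [← hdk, mul_assoc, mul_assoc, hθθ, mul_one]
    have hk0 : Integrable k0 μ := by
      rw [← integrable_rnDeriv_smul_iff hac]
      refine Integrable.congr (f := fun t => S.indicator g t * θ t) ?_ ?_
      · exact (hgi.indicator hS).mul_bdd (c := 1) hm.aestronglyMeasurable
          (ae_of_all _ fun t => (hθ t).le)
      · exact ae_of_all _ fun t => (hdk' t).symm
    have hgS : Integrable (S.indicator g) ρ := hgi.indicator hS
    have hdθ : Integrable (fun t => d t * θ t) ρ :=
      Integrable.mul_bdd (c := 1) Measure.integrable_toReal_rnDeriv hm.aestronglyMeasurable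
        (ae_of_all _ fun t => (hθ t).le)
    have e1 : W (hk0.toL1 k0) = Jm ρ (hgS.toL1 _) := by
      ext y
      rw [hW, Jm_eq ρ _ _ hgS.coeFn_toL1]
      rw [← integral_rnDeriv_smul hac]
      have : ∫ t, (hk0.toL1 k0) t * θ t * y t ∂μ = ∫ t, k0 t * θ t * y t ∂μ := by
        refine integral_congr_ae ?_
        filter_upwards [hk0.coeFn_toL1] with t ht
        rw [ht]
      rw [integral_rnDeriv_smul hac, this, ← integral_rnDeriv_smul hac]
      congr 1; ext t
      rw [← hdk, smul_eq_mul]; ring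
    have e2 : F = Jm ρ (hdθ.toL1 _) := by
      ext y
      rw [hF, Jm_eq ρ _ _ hdθ.coeFn_toL1, ← integral_rnDeriv_smul hac]
      congr 1; ext t; rw [smul_eq_mul, mul_assoc]
    refine ⟨hk0.toL1 k0, ?_⟩
    rw [e1, ← hg, e2]
    have e3 := (Jm ρ).map_sub g (hgS.toL1 _)
    rw [← e3]
    have hd2 : LDisj (g - hgS.toL1 _) (hdθ.toL1 _) := by
     refine L1_ldisj_of_mul _ _ ?_
     filter_upwards [Lp.coeFn_sub g (hgS.toL1 _), hgS.coeFn_toL1, hdθ.coeFn_toL1] with t h1 h2 h3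
     rw [h1, Pi.sub_apply, h2, h3]
     by_cases h : d t = 0
     · simp [h]
     · rw [Set.indicator_of_mem (show t ∈ S from h)]; simp
    refine ⟨?_, ?_⟩
    · have e4 := (Jm ρ).map_add (g - hgS.toL1 _) (hdθ.toL1 _)
      rw [← e4, (Jm ρ).norm_map, (Jm ρ).norm_map, (Jm ρ).norm_map]; exact hd2.1
    · have e4 := (Jm ρ).map_sub (g - hgS.toL1 _) (hdθ.toL1 _)
      rw [← e4, (Jm ρ).norm_map, (Jm ρ).norm_map, (Jm ρ).norm_map]; exact hd2.2
end ZF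


lemma L1_mul_of_ldisj {Ω : Type*} [MeasurableSpace Ω] {μ : Measure Ω} (u v : Lp ℝ 1 μ)
    (h : LDisj u v) : ∀ᵐ t ∂μ, u t * v t = 0 := by
  have hu := L1.integrable_coeFn u
  have hv := L1.integrable_coeFn v
  obtain ⟨h1, h2⟩ := h
  have e1 : ∀ᵐ t ∂μ, |u t + v t| = |u t| + |v t| := by
    refine (integral_eq_iff_of_ae_le (hu.add hv).abs (hu.abs.add hv.abs)
      (ae_of_all _ fun t => abs_add_le _ _)).1 ?_
    rw [L1.norm_eq_integral_norm, L1.norm_eq_integral_norm, L1.norm_eq_integral_norm,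
      ← integral_add hu.norm hv.norm] at h1
    refine Eq.trans ?_ h1
    refine integral_congr_ae ?_
    filter_upwards [Lp.coeFn_add u v] with t ht
    rw [ht]; rfl
  have e2 : ∀ᵐ t ∂μ, |u t - v t| = |u t| + |v t| := by
    refine (integral_eq_iff_of_ae_le (hu.sub hv).abs (hu.abs.add hv.abs)
      (ae_of_all _ fun t => abs_sub _ _)).1 ?_
    rw [L1.norm_eq_integral_norm, L1.norm_eq_integral_norm, L1.norm_eq_integral_norm,
      ← integral_add hu.norm hv.norm] at h2
    refine Eq.trans ?_ h2
    refine integral_congr_ae ?_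
    filter_upwards [Lp.coeFn_sub u v] with t ht
    rw [ht]; rfl
  filter_upwards [e1, e2] with t h3 h4
  rw [mul_eq_zero]
  by_contra! hc
  rcases abs_cases (u t) with ⟨h5, h6⟩ | ⟨h5, h6⟩ <;> rcases abs_cases (v t) with ⟨h7, h8⟩ | ⟨h7, h8⟩ <;>
  rcases abs_cases (u t + v t) with ⟨h9, h10⟩ | ⟨h9, h10⟩ <;>
  rcases abs_cases (u t - v t) with ⟨h11, h12⟩ | ⟨h11, h12⟩ <;>
  first
  | exact hc.1 (by linarith)
  | exact hc.2 (by linarith)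

/-- Norm additivity in `L¹` means pointwise additivity of the absolute values. -/
lemma L1_abs_add {Ω : Type*} [MeasurableSpace Ω] {μ : Measure Ω} (u v : Lp ℝ 1 μ)
    (h : ‖u + v‖ = ‖u‖ + ‖v‖) : ∀ᵐ t ∂μ, |u t + v t| = |u t| + |v t| := by
  have hu := L1.integrable_coeFn u
  have hv := L1.integrable_coeFn v
  refine (integral_eq_iff_of_ae_le (hu.add hv).abs (hu.abs.add hv.abs)
      (ae_of_all _ fun t => abs_add_le _ _)).1 ?_
  rw [L1.norm_eq_integral_norm, L1.norm_eq_integral_norm, L1.norm_eq_integral_norm,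
      ← integral_add hu.norm hv.norm] at h
  refine Eq.trans ?_ h
  refine integral_congr_ae ?_
  filter_upwards [Lp.coeFn_add u v] with t ht
  rw [ht]; rfl


/-- The abstract properties of `C(K)*` used below. -/
structure ZProp (K : Type u) [MeasurableSpace K] (Z : Type v) [NormedAddCommGroup Z]
    [NormedSpace ℝ Z] : Prop where
  common : ∀ (G₁ G₂ G₃ : Z),
    ∃ (μ : Measure K) (J : Lp ℝ 1 μ →ₗᵢ[ℝ] Z) (g₁ g₂ g₃ : Lp ℝ 1 μ),
      J g₁ = G₁ ∧ J g₂ = G₂ ∧ J g₃ = G₃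
  rep : ∀ F : Z,
    ∃ (ν : Measure K) (_ : IsFiniteMeasure ν) (W : Lp ℝ 1 ν →ₗᵢ[ℝ] Z),
      W (Lp.const 1 ν 1) = F ∧
      (∀ A B, A + B = F → ‖A‖ + ‖B‖ ≤ ‖F‖ → ∃ a, 0 ≤ a ∧ W a = A) ∧
      (∀ G, ∃ k, LDisj (G - W k) F)

theorem zProp_C (K : Type u) [TopologicalSpace K] [CompactSpace K] [T2Space K] [MeasurableSpace K]
    [BorelSpace K] : ZProp K (C(K, ℝ) →L[ℝ] ℝ) :=
  ⟨Z_common, Z_rep⟩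

section ZP
set_option linter.unusedSectionVars false
variable {K : Type u} [MeasurableSpace K] {Z : Type v} [NormedAddCommGroup Z] [NormedSpace ℝ Z]

lemma LDisj.symm {A B : Z} (h : LDisj A B) : LDisj B A :=
  ⟨by rw [add_comm, h.1, add_comm], by rw [norm_sub_rev, h.2, add_comm]⟩

lemma LDisj.isClosed (g : Z) : IsClosed {G : Z | LDisj G g} := by
  refine IsClosed.inter ?_ ?_
  · exact isClosed_eq (by fun_prop) (by fun_prop)
  · exact isClosed_eq (by fun_prop) (by fun_prop)

lemma LDisj.zero (g : Z) : LDisj 0 g := by simp [LDisj]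

lemma LDisj.self_eq_zero {g : Z} (h : LDisj g g) : g = 0 := by
  have := h.2
  rw [sub_self, norm_zero] at this
  exact norm_le_zero_iff.1 (by linarith [norm_nonneg g])

namespace ZProp
variable (hZ : ZProp K Z)
include hZ

lemma ldisj_add {A B g : Z} (hA : LDisj A g) (hB : LDisj B g) : LDisj (A + B) g := by
  obtain ⟨μ, J, a, b, c, rfl, rfl, rfl⟩ := hZ.common A B g
  rw [LDisj.map] at hA hB
  rw [← J.map_add, LDisj.map]
  refine L1_ldisj_of_mul _ _ ?_
  filter_upwards [L1_mul_of_ldisj _ _ hA, L1_mul_of_ldisj _ _ hB, Lp.coeFn_add a b] with t h1 h2 h3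
  rw [h3, Pi.add_apply, add_mul, h1, h2, add_zero]

lemma ldisj_smul (c : ℝ) {A g : Z} (hA : LDisj A g) : LDisj (c • A) g := by
  obtain ⟨μ, J, a, b, -, rfl, rfl, -⟩ := hZ.common A g 0
  rw [LDisj.map] at hA
  rw [← J.map_smul, LDisj.map]
  refine L1_ldisj_of_mul _ _ ?_
  filter_upwards [L1_mul_of_ldisj _ _ hA, Lp.coeFn_smul c a] with t h1 h3
  rw [h3, Pi.smul_apply, smul_eq_mul, mul_assoc, h1, mul_zero]

lemma ldisj_sub {A B g : Z} (hA : LDisj A g) (hB : LDisj B g) : LDisj (A - B) g := by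
  have := hZ.ldisj_add hA (hZ.ldisj_smul (-1) hB)
  rwa [neg_one_smul, ← sub_eq_add_neg] at this

lemma ldisj_sum {ι : Type*} (s : Finset ι) (A : ι → Z) {g : Z} (hA : ∀ i ∈ s, LDisj (A i) g) :
    LDisj (∑ i ∈ s, A i) g := by
  classical
  induction s using Finset.induction_on with
  | empty => simpa using LDisj.zero g
  | insert i s hi ih =>
    rw [Finset.sum_insert hi]
    exact hZ.ldisj_add (hA i (by simp)) (ih fun j hj => hA j (by simp [hj]))

lemma norm_sum {ι : Type*} (s : Finset ι) (A : ι → Z)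
    (hA : ∀ i ∈ s, ∀ j ∈ s, i ≠ j → LDisj (A i) (A j)) :
    ‖∑ i ∈ s, A i‖ = ∑ i ∈ s, ‖A i‖ := by
  classical
  induction s using Finset.induction_on with
  | empty => simp
  | insert i s hi ih =>
    rw [Finset.sum_insert hi, Finset.sum_insert hi,
      ← ih fun j hj k hk => hA j (by simp [hj]) k (by simp [hk])]
    refine (LDisj.symm (hZ.ldisj_sum s A fun j hj => hA j (by simp [hj]) i (by simp) ?_)).1
    rintro rfl; exact hi hj

lemma ldisj_split {A B g : Z} (h : LDisj (A + B) g) (hn : ‖A + B‖ = ‖A‖ + ‖B‖) : LDisj A g := by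
  obtain ⟨μ, J, a, b, c, rfl, rfl, rfl⟩ := hZ.common A B g
  rw [← J.map_add, LDisj.map] at h
  rw [← J.map_add, J.norm_map, J.norm_map, J.norm_map] at hn
  rw [LDisj.map]
  refine L1_ldisj_of_mul _ _ ?_
  filter_upwards [L1_mul_of_ldisj _ _ h, L1_abs_add _ _ hn, Lp.coeFn_add a b] with t h1 h2 h3
  rw [h3, Pi.add_apply] at h1
  rcases mul_eq_zero.1 h1 with h4 | h4
  · rw [h4, abs_zero] at h2
    have : a t = 0 := abs_eq_zero.1 (by linarith [abs_nonneg (a t), abs_nonneg (b t)])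
    rw [this, zero_mul]
  · rw [h4, mul_zero]

lemma ldisj_W {ν : Measure K} [IsFiniteMeasure ν] (W : Lp ℝ 1 ν →ₗᵢ[ℝ] Z) {g : Z}
    (h : LDisj (W (Lp.const 1 ν 1)) g) (k : Lp ℝ 1 ν) : LDisj (W k) g := by
  refine Lp.induction (p := 1) (by simp) (fun k => LDisj (W k) g) ?_ ?_ ?_ k
  · intro c s hs hμs
    rw [Lp.simpleFunc.coe_indicatorConst]
    have e : indicatorConstLp 1 hs hμs.ne c = c • indicatorConstLp 1 hs hμs.ne (1:ℝ) := by
      apply Lp.ext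
      filter_upwards [indicatorConstLp_coeFn (p := 1) (hs := hs) (hμs := hμs.ne) (c := c),
        indicatorConstLp_coeFn (p := 1) (hs := hs) (hμs := hμs.ne) (c := (1:ℝ)),
        Lp.coeFn_smul c (indicatorConstLp 1 hs hμs.ne (1:ℝ))] with t h1 h2 h3
      rw [h1, h3, Pi.smul_apply, h2]
      by_cases ht : t ∈ s <;> simp [ht]
    have e2 : indicatorConstLp 1 hs hμs.ne (1:ℝ) + indicatorConstLp 1 hs.compl (measure_ne_top ν _) (1:ℝ)
        = Lp.const 1 ν 1 := by
      apply Lp.ext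
      filter_upwards [indicatorConstLp_coeFn (p := 1) (hs := hs) (hμs := hμs.ne) (c := (1:ℝ)),
        indicatorConstLp_coeFn (p := 1) (hs := hs.compl) (hμs := measure_ne_top ν _) (c := (1:ℝ)),
        Lp.coeFn_const (p := 1) (μ := ν) (1 : ℝ),
        Lp.coeFn_add (indicatorConstLp 1 hs hμs.ne (1:ℝ)) (indicatorConstLp 1 hs.compl (measure_ne_top ν _) (1:ℝ))]
          with t h1 h2 h3 h4
      rw [h4, Pi.add_apply, h1, h2, h3]
      by_cases ht : t ∈ s <;> simp [ht]
    have e3 : LDisj (indicatorConstLp 1 hs hμs.ne (1:ℝ))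
       (indicatorConstLp 1 hs.compl (measure_ne_top ν _) (1:ℝ)) := by
      refine L1_ldisj_of_mul _ _ ?_
      filter_upwards [indicatorConstLp_coeFn (p := 1) (hs := hs) (hμs := hμs.ne) (c := (1:ℝ)),
        indicatorConstLp_coeFn (p := 1) (hs := hs.compl) (hμs := measure_ne_top ν _) (c := (1:ℝ))]
          with t h1 h2
      rw [h1, h2]
      by_cases ht : t ∈ s <;> simp [ht]
    rw [e, W.map_smul]
    refine hZ.ldisj_smul c (hZ.ldisj_split
      (B := W (indicatorConstLp 1 hs.compl (measure_ne_top ν _) (1:ℝ))) ?_ ?_)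
    · rw [← W.map_add, e2]; exact h
    · exact ((LDisj.map W).2 e3).1
  · intro f1 f2 h1 h2 _ h3 h4
    rw [W.map_add]
    exact hZ.ldisj_add h3 h4
  · exact (LDisj.isClosed g).preimage W.continuous
end ZProp
end ZP


section sub
set_option linter.unusedSectionVars false
variable {K : Type*} [m0 : MeasurableSpace K] (ν : Measure K) [IsFiniteMeasure ν]

/-- indicator as an element of `L¹`. -/
noncomputable def ind1 {A : Set K} (hA : MeasurableSet A) : Lp ℝ 1 ν :=
  indicatorConstLp 1 hA (measure_ne_top ν A) (1:ℝ)

lemma ind1_coe {A : Set K} (hA : MeasurableSet A) : ind1 ν hA =ᵐ[ν] A.indicator fun _ => (1:ℝ) :=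
  indicatorConstLp_coeFn

lemma ind1_smul {A : Set K} (hA : MeasurableSet A) (c : ℝ) :
    indicatorConstLp 1 hA (measure_ne_top ν A) c = c • ind1 ν hA := by
  apply Lp.ext
  filter_upwards [indicatorConstLp_coeFn (p := 1) (hs := hA) (hμs := measure_ne_top ν A) (c := c),
    ind1_coe ν hA, Lp.coeFn_smul c (ind1 ν hA)] with t h1 h2 h3
  rw [h1, h3, Pi.smul_apply, h2]
  by_cases ht : t ∈ A <;> simp [ht]

variable (U : Submodule ℝ (Lp ℝ 1 ν)) (hU : IsClosed (U : Set (Lp ℝ 1 ν)))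
  (h1 : Lp.const 1 ν (1:ℝ) ∈ U) (hpos : ∀ k ∈ U, k ⊔ 0 ∈ U)

section
include hpos
omit [IsFiniteMeasure ν] in
lemma U_sup {a b : Lp ℝ 1 ν} (ha : a ∈ U) (hb : b ∈ U) : a ⊔ b ∈ U := by
  have : a ⊔ b = (a - b) ⊔ 0 + b := by rw [sup_add]; simp
  rw [this]
  exact U.add_mem (hpos _ (U.sub_mem ha hb)) hb

omit [IsFiniteMeasure ν] in
lemma U_inf {a b : Lp ℝ 1 ν} (ha : a ∈ U) (hb : b ∈ U) : a ⊓ b ∈ U := by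
  have : a ⊓ b = a + b - a ⊔ b := by rw [← inf_add_sup a b]; simp
  rw [this]
  exact U.sub_mem (U.add_mem ha hb) (U_sup ν U hpos ha hb)
end

include hU h1 hpos in
lemma U_union {A B : Set K} (hA : ∃ h : MeasurableSet A, ind1 ν h ∈ U)
    (hB : ∃ h : MeasurableSet B, ind1 ν h ∈ U) : ∃ h : MeasurableSet (A ∪ B), ind1 ν h ∈ U := by
  obtain ⟨hA, hA'⟩ := hA
  obtain ⟨hB, hB'⟩ := hB
  refine ⟨hA.union hB, ?_⟩
  have : ind1 ν (hA.union hB) = ind1 ν hA ⊔ ind1 ν hB := by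
    apply Lp.ext
    filter_upwards [ind1_coe ν hA, ind1_coe ν hB, ind1_coe ν (hA.union hB),
      Lp.coeFn_sup (ind1 ν hA) (ind1 ν hB)] with t h1 h2 h3 h4
    rw [h4, Pi.sup_apply, h1, h2, h3]
    by_cases ht : t ∈ A <;> by_cases ht' : t ∈ B <;> simp [ht, ht']
  rw [this]
  exact U_sup ν U hpos hA' hB'

/-- The sigma-algebra attached to a closed sublattice. -/
def sigU : MeasurableSpace K where
  MeasurableSet' A := ∃ h : MeasurableSet A, ind1 ν h ∈ U
  measurableSet_empty := ⟨MeasurableSet.empty, by simp [ind1]⟩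
  measurableSet_compl A := by
    rintro ⟨hA, hA'⟩
    refine ⟨hA.compl, ?_⟩
    have : ind1 ν hA.compl = Lp.const 1 ν (1:ℝ) - ind1 ν hA := by
      apply Lp.ext
      filter_upwards [ind1_coe ν hA, ind1_coe ν hA.compl, Lp.coeFn_const (p := 1) (μ := ν) (1 : ℝ),
        Lp.coeFn_sub (Lp.const 1 ν (1:ℝ)) (ind1 ν hA)] with t h1 h2 h3 h4
      rw [h4, Pi.sub_apply, h1, h2, h3]
      by_cases ht : t ∈ A <;> simp [ht]
    rw [this]
    exact U.sub_mem h1 hA'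
  measurableSet_iUnion A hA := by
    refine ⟨MeasurableSet.iUnion fun i => (hA i).1, ?_⟩
    have hacc : ∀ n, ∃ h : MeasurableSet (accumulate A n), ind1 ν h ∈ U := by
      intro n
      induction n with
      | zero => simpa using hA 0
      | succ n ih =>
        rw [accumulate_succ]
        exact U_union ν U hU h1 hpos ih (hA _)
    refine hU.mem_of_tendsto (f := fun n => ind1 ν (hacc n).1) (b := atTop) ?_
      (Eventually.of_forall fun n => (hacc n).2)
    refine tendsto_indicatorConstLp_set (by simp) ?_
    have h2 : ∀ n, accumulate A n ∆ (⋃ i, A i) = (⋃ i, A i) \ accumulate A n := by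
      intro n
      have : accumulate A n ⊆ ⋃ i, A i := by
        rw [← iUnion_accumulate]; exact subset_iUnion _ n
      rw [symmDiff_def]; simp; exact this.trans subset_union_left
    simp_rw [h2]
    have h3 := tendsto_measure_iInter_atTop (μ := ν) (s := fun n => (⋃ i, A i) \ accumulate A n)
      (fun n => ((MeasurableSet.iUnion fun i => (hA i).1).diff (hacc n).1).nullMeasurableSet)
      (fun a b hab => sdiff_subset_sdiff_right (monotone_accumulate hab)) ⟨0, measure_ne_top ν _⟩
    rw [← sdiff_iUnion, iUnion_accumulate, sdiff_self, measure_empty] at h3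
    exact h3

include hU h1 hpos in
lemma U_gt (k : Lp ℝ 1 ν) (hk : k ∈ U) (c : ℝ) :
    ∃ h : MeasurableSet {t | c < k t}, ind1 ν h ∈ U := by
  have hm : MeasurableSet {t | c < k t} :=
    measurableSet_lt measurable_const (Lp.stronglyMeasurable k).measurable
  refine ⟨hm, ?_⟩
  set o := Lp.const 1 ν (1:ℝ)
  let f : ℕ → Lp ℝ 1 ν := fun n => o ⊓ ((n : ℝ) • ((k - c • o) ⊔ 0))
  have hf : ∀ n, f n ∈ U := fun n => U_inf ν U hpos h1
    (U.smul_mem _ (hpos _ (U.sub_mem hk (U.smul_mem _ h1))))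
  refine hU.mem_of_tendsto (f := f) (b := atTop) ?_ (Eventually.of_forall hf)
  have hfc : ∀ᵐ t ∂ν, ∀ n, (f n) t = min 1 ((n:ℝ) * max (k t - c) 0) := by
    rw [ae_all_iff]
    intro n
    filter_upwards [Lp.coeFn_inf o ((n : ℝ) • ((k - c • o) ⊔ 0)),
      Lp.coeFn_smul (n : ℝ) ((k - c • o) ⊔ 0), Lp.coeFn_sup (k - c • o) 0, Lp.coeFn_sub k (c • o),
      Lp.coeFn_smul c o, Lp.coeFn_const (p := 1) (μ := ν) (1 : ℝ), Lp.coeFn_zero ℝ 1 ν]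
      with t h1 h2 h3 h4 h5 h6 h7
    rw [h1, Pi.inf_apply, h2, Pi.smul_apply, h3, Pi.sup_apply, h4, Pi.sub_apply, h5, Pi.smul_apply,
      h6, h7]
    simp
  rw [tendsto_iff_norm_sub_tendsto_zero]
  have e : ∀ n, ‖f n - ind1 ν hm‖ = ∫ t, ‖(f n) t - {t | c < k t}.indicator (fun _ => (1:ℝ)) t‖ ∂ν := by
    intro n
    rw [L1.norm_eq_integral_norm]
    refine integral_congr_ae ?_
    filter_upwards [Lp.coeFn_sub (f n) (ind1 ν hm), ind1_coe ν hm] with t h1 h2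
    rw [h1, Pi.sub_apply, h2]
  simp_rw [e]
  have := tendsto_integral_of_dominated_convergence (μ := ν) (f := fun _ => (0:ℝ))
    (F := fun n t => ‖(f n) t - {t | c < k t}.indicator (fun _ => (1:ℝ)) t‖) (fun _ => 1) ?_
    (integrable_const _) ?_ ?_
  · simpa using this
  · intro n
    exact ((Lp.stronglyMeasurable (f n)).aestronglyMeasurable.sub
      (aestronglyMeasurable_const.indicator hm)).norm
  · intro n
    filter_upwards [hfc] with t ht
    rw [ht n, norm_norm, Real.norm_eq_abs]
    have h0 : 0 ≤ (n:ℝ) * max (k t - c) 0 := by positivity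
    by_cases h : c < k t
    · rw [Set.indicator_of_mem (show t ∈ {t | c < k t} from h), abs_le]
      have : 0 ≤ min 1 ((n:ℝ) * max (k t - c) 0) := le_min zero_le_one h0
      constructor <;> linarith [min_le_left 1 ((n:ℝ) * max (k t - c) 0)]
    · rw [Set.indicator_of_notMem (show t ∉ {t | c < k t} from h), max_eq_right (by linarith)]
      simp
  · filter_upwards [hfc] with t ht
    simp_rw [ht]
    refine tendsto_const_nhds.congr' ?_
    by_cases h : c < k t
    · have hp : 0 < k t - c := by linarith
      obtain ⟨N, hN⟩ := exists_nat_ge (1 / (k t - c))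
      filter_upwards [eventually_ge_atTop N] with n hn
      rw [Set.indicator_of_mem (show t ∈ {t | c < k t} from h), max_eq_left hp.le, min_eq_left]
      · simp
      · have : (1 / (k t - c)) ≤ n := hN.trans (by exact_mod_cast hn)
        rwa [div_le_iff₀ hp] at this
    · refine Eventually.of_forall fun n => ?_
      rw [Set.indicator_of_notMem (show t ∉ {t | c < k t} from h), max_eq_right (by linarith)]
      simp

include hU h1 hpos in
theorem L1_sublattice : ∃ (m : MeasurableSpace K) (μ : @Measure K m) (_ : IsFiniteMeasure μ)
    (V : @Lp K ℝ m _ 1 μ →ₗᵢ[ℝ] Lp ℝ 1 ν), ∀ k, k ∈ U ↔ ∃ h, V h = k := by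
  have hm : sigU ν U hU h1 hpos ≤ m0 := fun A hA => hA.1
  refine ⟨sigU ν U hU h1 hpos, ν.trim hm, inferInstance,
    (lpMeas ℝ ℝ (sigU ν U hU h1 hpos) 1 ν).subtypeₗᵢ.comp
      (lpMeasToLpTrimLie ℝ ℝ 1 ν hm).symm.toLinearIsometry, ?_⟩
  have key : ∀ k, k ∈ U ↔ k ∈ lpMeas ℝ ℝ (sigU ν U hU h1 hpos) 1 ν := by
    intro k
    constructor
    · intro hk
      rw [mem_lpMeas_iff_aestronglyMeasurable]
      refine ⟨k, ?_, ae_eq_refl _⟩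
      refine Measurable.stronglyMeasurable (mα := sigU ν U hU h1 hpos) ?_
      refine measurable_of_Ioi fun c => U_gt ν U hU h1 hpos k hk c
    · intro hk
      rw [mem_lpMeas_iff_aestronglyMeasurable] at hk
      refine Lp.induction_stronglyMeasurable hm (by simp) (fun k => k ∈ U) ?_ ?_ ?_ k hk
      · intro c s hs hμs
        rw [Lp.simpleFunc.coe_indicatorConst, ind1_smul]
        exact U.smul_mem _ hs.2
      · intro f g hf hg _ _ _ h1 h2
        exact U.add_mem h1 h2
      · exact hU.preimage continuous_subtype_val
  intro k
  rw [key]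
  constructor
  · intro hk
    exact ⟨lpMeasToLpTrimLie ℝ ℝ 1 ν hm ⟨k, hk⟩, by simp⟩
  · rintro ⟨h, rfl⟩
    exact Subtype.property _
end sub


lemma L1_norm_add_nonneg {Ω : Type*} [MeasurableSpace Ω] {μ : Measure Ω} (a b : Lp ℝ 1 μ)
    (ha : 0 ≤ a) (hb : 0 ≤ b) : ‖a + b‖ = ‖a‖ + ‖b‖ := by
  rw [L1.norm_eq_integral_norm, L1.norm_eq_integral_norm, L1.norm_eq_integral_norm,
      ← integral_add (L1.integrable_coeFn a).norm (L1.integrable_coeFn b).norm]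
  refine integral_congr_ae ?_
  filter_upwards [(Lp.coeFn_nonneg a).2 ha, (Lp.coeFn_nonneg b).2 hb, Lp.coeFn_add a b] with t h1 h2 h3
  simp only [Pi.zero_apply] at h1 h2
  rw [h3, Pi.add_apply, Real.norm_eq_abs, Real.norm_eq_abs, Real.norm_eq_abs, abs_of_nonneg h1,
    abs_of_nonneg h2, abs_of_nonneg (add_nonneg h1 h2)]

section ZP
set_option linter.unusedSectionVars false
variable {K : Type u} [MeasurableSpace K] {Z : Type v} [NormedAddCommGroup Z] [NormedSpace ℝ Z]

section proj
variable (P : Z →L[ℝ] Z) (hP1 : ∀ G, ‖P G‖ ≤ ‖G‖)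
  {ν : Measure K} [IsFiniteMeasure ν] (W : Lp ℝ 1 ν →ₗᵢ[ℝ] Z)
  (hPf : P (W (Lp.const 1 ν 1)) = W (Lp.const 1 ν 1))
  (hsplit : ∀ A B, A + B = W (Lp.const 1 ν 1) → ‖A‖ + ‖B‖ ≤ ‖W (Lp.const 1 ν 1)‖ →
    ∃ a, 0 ≤ a ∧ W a = A)
include hP1 hPf hsplit

lemma proj_ind {s : Set K} (hs : MeasurableSet s) : ∃ a, 0 ≤ a ∧ W a = P (W (ind1 ν hs)) := by
  have h0 : ∀ {s : Set K} (hs : MeasurableSet s), 0 ≤ ind1 ν hs := by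
    intro s hs
    rw [← Lp.coeFn_nonneg]
    filter_upwards [ind1_coe ν hs] with t ht
    rw [ht]
    by_cases h : t ∈ s <;> simp [h]
  have e2 : ind1 ν hs + ind1 ν hs.compl = Lp.const 1 ν 1 := by
    apply Lp.ext
    filter_upwards [ind1_coe ν hs, ind1_coe ν hs.compl,
        Lp.coeFn_const (p := 1) (μ := ν) (1 : ℝ),
        Lp.coeFn_add (ind1 ν hs) (ind1 ν hs.compl)]
          with t h1 h2 h3 h4
    rw [h4, Pi.add_apply, h1, h2, h3]
    by_cases ht : t ∈ s <;> simp [ht]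
  refine hsplit (P (W (ind1 ν hs))) (P (W (ind1 ν hs.compl))) ?_ ?_
  · rw [← P.map_add, ← W.map_add, e2, hPf]
  · rw [← e2, W.norm_map, L1_norm_add_nonneg _ _ (h0 hs) (h0 hs.compl), ← W.norm_map,
      ← W.norm_map (ind1 ν hs.compl)]
    exact add_le_add (hP1 _) (hP1 _)

lemma proj_pos (k : Lp ℝ 1 ν) : ∃ a, 0 ≤ a ∧ W a = P (W (k ⊔ 0)) := by
  refine Lp.induction (p := 1) (by simp) (fun k => ∃ a, 0 ≤ a ∧ W a = P (W (k ⊔ 0))) ?_ ?_ ?_ k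
  · intro c s hs hμs
    rw [Lp.simpleFunc.coe_indicatorConst]
    obtain ⟨a, ha, hWa⟩ := proj_ind P hP1 W hPf hsplit hs
    refine ⟨(max c 0) • a, ?_, ?_⟩
    · rw [← Lp.coeFn_nonneg] at ha ⊢
      filter_upwards [ha, Lp.coeFn_smul (max c 0) a] with t h1 h2
      rw [h2]
      exact mul_nonneg (le_max_right _ _) h1
    · have : indicatorConstLp 1 hs hμs.ne c ⊔ 0 = (max c 0) • ind1 ν hs := by
        apply Lp.ext
        filter_upwards [indicatorConstLp_coeFn (p := 1) (hs := hs) (hμs := hμs.ne) (c := c),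
          ind1_coe ν hs, Lp.coeFn_smul (max c 0) (ind1 ν hs), Lp.coeFn_zero ℝ 1 ν,
          Lp.coeFn_sup (indicatorConstLp 1 hs hμs.ne c) 0] with t h1 h2 h3 h4 h5
        rw [h5, h3, Pi.smul_apply, h2, Pi.sup_apply, h1, h4]
        by_cases ht : t ∈ s <;> simp [ht]
      rw [this, W.map_smul, W.map_smul, P.map_smul, hWa]
  · rintro f g hf hg hd ⟨a, ha, hWa⟩ ⟨b, hb, hWb⟩
    refine ⟨a + b, add_nonneg ha hb, ?_⟩
    have : (hf.toLp f + hg.toLp g) ⊔ 0 = hf.toLp f ⊔ 0 + hg.toLp g ⊔ 0 := by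
      apply Lp.ext
      filter_upwards [hf.coeFn_toLp, hg.coeFn_toLp, Lp.coeFn_add (hf.toLp f) (hg.toLp g),
        Lp.coeFn_add (hf.toLp f ⊔ 0) (hg.toLp g ⊔ 0), Lp.coeFn_zero ℝ 1 ν,
        Lp.coeFn_sup (hf.toLp f) 0, Lp.coeFn_sup (hg.toLp g) 0,
        Lp.coeFn_sup (hf.toLp f + hg.toLp g) 0] with t h1 h2 h3 h4 h5 h6 h7 h8
      rw [h8, h4, Pi.sup_apply, h3, Pi.add_apply, Pi.add_apply, h6, h7, Pi.sup_apply, Pi.sup_apply,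
        h1, h2, h5]
      by_cases ht : f t = 0
      · simp [ht]
      · have : g t = 0 := by
          by_contra h
          exact Set.disjoint_left.1 hd (show t ∈ Function.support f from ht) h
        simp [this]
    rw [this, W.map_add, W.map_add, P.map_add, hWa, hWb]
  · have hc : IsClosed (W '' {a | 0 ≤ a}) :=
      W.isometry.isClosedEmbedding.isClosedMap _ isClosed_nonneg
    have hcont : Continuous fun k : Lp ℝ 1 ν => P (W (k ⊔ 0)) :=
      P.continuous.comp (W.continuous.comp (continuous_id.sup continuous_const))
    exact hc.preimage hcont

lemma proj_any (k : Lp ℝ 1 ν) : ∃ a, W a = P (W k) := by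
  obtain ⟨a, -, ha⟩ := proj_pos P hP1 W hPf hsplit k
  obtain ⟨b, -, hb⟩ := proj_pos P hP1 W hPf hsplit (-k)
  refine ⟨a - b, ?_⟩
  rw [W.map_sub, ha, hb, ← P.map_sub, ← W.map_sub]
  congr 2
  exact posPart_sub_negPart k

lemma fix_pos (k : Lp ℝ 1 ν) (hk : P (W k) = W k) : P (W (k ⊔ 0)) = W (k ⊔ 0) := by
  obtain ⟨a, ha0, ha⟩ := proj_pos P hP1 W hPf hsplit k
  obtain ⟨b, hb0, hb⟩ := proj_pos P hP1 W hPf hsplit (-k)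
  have hab : a - b = k := by
    apply W.injective
    rw [W.map_sub, ha, hb, ← P.map_sub, ← W.map_sub, ← hk]
    congr 2
    exact posPart_sub_negPart k
  have hle : k ⊔ 0 ≤ a := by
    refine sup_le ?_ ha0
    rw [← hab]; exact sub_le_self a hb0
  have h1 : ‖a‖ ≤ ‖k ⊔ 0‖ := by
    rw [← W.norm_map, ha, ← W.norm_map]; exact hP1 _
  have h2 := L1_norm_add_nonneg (a - k ⊔ 0) (k ⊔ 0) (sub_nonneg.2 hle) le_sup_right
  rw [sub_add_cancel] at h2
  have h3 : a - k ⊔ 0 = 0 := norm_le_zero_iff.1 (by linarith)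
  rw [← ha, sub_eq_zero.1 h3]
end proj

namespace ZProp
variable (hZ : ZProp K Z)
include hZ

theorem M_rep (P : Z →L[ℝ] Z) (hP1 : ∀ G, ‖P G‖ ≤ ‖G‖) (f : Z) (hf : P f = f) :
    ∃ (m : MeasurableSpace K) (μ : @Measure K m) (_ : IsFiniteMeasure μ)
      (V : @Lp K ℝ m _ 1 μ →ₗᵢ[ℝ] Z), (∀ h, P (V h) = V h) ∧
        (∀ g, LDisj f g → ∀ h, LDisj (V h) g) ∧
        (∀ G, P G = G → ∃ h, LDisj (G - V h) f) := by
  obtain ⟨ν, _, W, rfl, hsplit, hk⟩ := hZ.rep f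
  let U : Submodule ℝ (Lp ℝ 1 ν) :=
    { carrier := {k | P (W k) = W k}
      add_mem' := by
        intro a b ha hb
        simp only [mem_ofPred_eq] at ha hb ⊢
        rw [W.map_add, P.map_add, ha, hb]
      zero_mem' := by simp
      smul_mem' := by
        intro c a ha
        simp only [mem_ofPred_eq] at ha ⊢
        rw [W.map_smul, P.map_smul, ha] }
  have hU : IsClosed (U : Set (Lp ℝ 1 ν)) :=
    isClosed_eq (P.continuous.comp W.continuous) W.continuous
  have hd : ∀ g, LDisj (W (Lp.const 1 ν 1)) g → ∀ k, LDisj (W k) g := fun g hg k =>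
    hZ.ldisj_W W hg k
  have hp : ∀ G, P G = G → ∃ k ∈ U, LDisj (G - W k) (W (Lp.const 1 ν 1)) := by
    intro G hG
    obtain ⟨k, hk⟩ := hk G
    refine ⟨k, ?_, hk⟩
    obtain ⟨a, ha⟩ := proj_any P hP1 W hf hsplit k
    have e : P (G - W k) = (G - W k) + W (k - a) := by
      rw [P.map_sub, hG, ← ha, W.map_sub]; abel
    have h1 := (hd _ hk.symm (k - a)).symm.1
    rw [← e, W.norm_map] at h1
    have h2 := hP1 (G - W k)
    have h3 : k - a = 0 := norm_le_zero_iff.1 (by linarith)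
    change P (W k) = W k
    rw [← ha, sub_eq_zero.1 h3]
  have hL := L1_sublattice ν U hU hf (fun k hk => fix_pos P hP1 W hf hsplit k hk)
  have hUm : ∀ k ∈ U, P (W k) = W k := fun k hk => hk
  clear_value U
  revert hL
  rintro ⟨m, μ, hμ, V, hV⟩
  refine ⟨m, μ, hμ, W.comp V, ?_, ?_, ?_⟩
  · intro h
    exact hUm _ ((hV (V h)).2 ⟨h, rfl⟩)
  · intro g hg h
    exact hd g hg (V h)
  · intro G hG
    obtain ⟨k, hkU, hk⟩ := hp G hG
    obtain ⟨h, rfl⟩ := (hV k).1 hkU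
    exact ⟨h, hk⟩

theorem M_decomp [CompleteSpace Z] (P : Z →L[ℝ] Z) (hP1 : ∀ G, ‖P G‖ ≤ ‖G‖) :
    ∃ (I : Type v) (m : I → MeasurableSpace K) (μ : ∀ i, @Measure K (m i))
      (_ : ∀ i, IsFiniteMeasure (μ i)) (V : ∀ i, @Lp K ℝ (m i) _ 1 (μ i) →ₗᵢ[ℝ] Z),
      (∀ i h, P (V i h) = V i h) ∧
      (∀ (s : Finset I) (h : ∀ i, @Lp K ℝ (m i) _ 1 (μ i)), ‖∑ i ∈ s, V i (h i)‖ = ∑ i ∈ s, ‖h i‖) ∧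
      (∀ G, P G = G → ∃ h : ∀ i, @Lp K ℝ (m i) _ 1 (μ i), (Summable fun i => ‖h i‖) ∧
        HasSum (fun i => V i (h i)) G) := by
  classical
  obtain ⟨𝓕, h𝓕⟩ := zorn_subset {𝓕 : Set Z | (∀ f ∈ 𝓕, P f = f ∧ f ≠ 0) ∧ 𝓕.Pairwise LDisj} (by
    intro c hc hchain
    refine ⟨⋃₀ c, ⟨?_, ?_⟩, fun s hs => subset_sUnion_of_mem hs⟩
    · rintro f ⟨s, hs, hf⟩
      exact (hc hs).1 f hf
    · refine (pairwise_sUnion hchain.directedOn).2 fun s hs => (hc hs).2)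
  obtain ⟨⟨hM, hpw⟩, hmax⟩ := h𝓕
  choose m μ hμ V hVP hVd hVk using fun i : 𝓕 => hZ.M_rep P hP1 i (hM i i.2).1
  have hVV : ∀ i j : 𝓕, i ≠ j → ∀ h h', LDisj (V i h) (V j h') := by
    intro i j hij h h'
    have h1 : LDisj (i : Z) j := hpw i.2 j.2 fun e => hij (Subtype.ext e)
    exact hVd i _ (hVd j _ h1.symm h').symm h
  have hns : ∀ (s : Finset 𝓕) (h : ∀ i, @Lp K ℝ (m i) _ 1 (μ i)),
      ‖∑ i ∈ s, V i (h i)‖ = ∑ i ∈ s, ‖h i‖ := by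
    intro s h
    rw [hZ.norm_sum s _ fun i _ j _ hij => hVV i j hij _ _]
    exact Finset.sum_congr rfl fun i _ => (V i).norm_map _
  refine ⟨𝓕, m, μ, hμ, V, hVP, hns, ?_⟩
  intro G hG
  choose h hh using fun i => hVk i G hG
  have hR : ∀ (s : Finset 𝓕), ∀ i ∈ s, LDisj (G - ∑ j ∈ s, V j (h j)) (i : Z) := by
    intro s i hi
    have e : G - ∑ j ∈ s, V j (h j) = (G - V i (h i)) - ∑ j ∈ s.erase i, V j (h j) := by
      rw [← Finset.add_sum_erase s _ hi]; abel
    rw [e]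
    refine hZ.ldisj_sub (hh i) (hZ.ldisj_sum _ _ fun j hj => hVd j _ ?_ _)
    exact hpw j.2 i.2 fun e => (Finset.mem_erase.1 hj).1 (Subtype.ext e)
  have hbd : ∀ s : Finset 𝓕, ∑ i ∈ s, ‖h i‖ ≤ ‖G‖ := by
    intro s
    have h1 : LDisj (∑ j ∈ s, V j (h j)) (G - ∑ j ∈ s, V j (h j)) :=
      hZ.ldisj_sum s _ fun i hi => hVd i _ (hR s i hi).symm _
    have h2 := h1.1
    rw [add_sub_cancel, hns] at h2
    linarith [norm_nonneg (G - ∑ j ∈ s, V j (h j))]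
  have hsum : Summable fun i => ‖h i‖ := summable_of_sum_le (fun i => norm_nonneg _) hbd
  refine ⟨h, hsum, ?_⟩
  have hsV : Summable fun i => V i (h i) := by
    refine Summable.of_norm ?_
    convert hsum using 2 with i
    exact (V i).norm_map _
  set S := ∑' i, V i (h i) with hS
  have hHS : HasSum (fun i => V i (h i)) S := hsV.hasSum
  have hRd : ∀ i : 𝓕, LDisj (G - S) (i : Z) := by
    intro i
    refine (LDisj.isClosed (i : Z)).mem_of_tendsto (tendsto_const_nhds.sub hHS) ?_
    filter_upwards [eventually_ge_atTop {i}] with s hs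
    exact hR s i (hs (by simp))
  have hRP : P (G - S) = G - S := by
    have h1 := P.hasSum hHS
    have h2 : HasSum (fun i => V i (h i)) (P S) := by
      convert h1 using 2 with i
      exact (hVP i _).symm
    rw [P.map_sub, hG, h2.unique hHS]
  suffices h0 : G - S = 0 by rw [sub_eq_zero.1 h0]; exact hHS
  by_contra h0
  have h1 : G - S ∈ 𝓕 := by
    refine hmax (y := insert (G - S) 𝓕) ⟨?_, ?_⟩ (subset_insert _ _) (mem_insert _ _)
    · rintro f (rfl | hf)
      · exact ⟨hRP, h0⟩
      · exact hM f hf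
    · refine hpw.insert fun f hf hne => ⟨hRd ⟨f, hf⟩, (hRd ⟨f, hf⟩).symm⟩
  exact h0 (hRd ⟨_, h1⟩).self_eq_zero
end ZProp
end ZP


section Ssum
variable {I : Type u} {β : I → Type u} [mβ : ∀ i, MeasurableSpace (β i)] (μ : ∀ i, Measure (β i))

lemma measurable_sigma_mk (i : I) : Measurable (Sigma.mk i : β i → Sigma β) := by
  intro s hs
  have h : ∀ a, MeasurableSet (Sigma.mk a ⁻¹' s) := MeasurableSpace.measurableSet_iInf.1 hs
  exact h i

lemma measurable_sigma_iff (f : Sigma β → ℝ) (h : ∀ i, Measurable fun t => f ⟨i, t⟩) :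
    Measurable f := by
  intro s hs
  exact MeasurableSpace.measurableSet_iInf.2 fun i => h i hs

/-- The disjoint sum measure -/
noncomputable def sigM : Measure (Sigma β) := Measure.sum fun i => (μ i).map (Sigma.mk i)

lemma lintegral_sigM (f : Sigma β → ℝ≥0∞) (hf : Measurable f) :
    ∫⁻ x, f x ∂(sigM μ) = ∑' i, ∫⁻ t, f ⟨i, t⟩ ∂(μ i) := by
  rw [sigM, lintegral_sum_measure]
  congr 1; ext i
  rw [lintegral_map hf (measurable_sigma_mk i)]

lemma sigM_ae {p : Sigma β → Prop} (h : ∀ᵐ x ∂(sigM μ), p x) (i : I) : ∀ᵐ t ∂(μ i), p ⟨i, t⟩ := by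
  have h1 : ∀ᵐ x ∂((μ i).map (Sigma.mk i)), p x :=
    ae_mono (Measure.le_sum (fun i => (μ i).map (Sigma.mk i)) i) h
  exact ae_of_ae_map (measurable_sigma_mk i).aemeasurable h1

lemma sigM_integrable {f : Sigma β → ℝ} (hf : Integrable f (sigM μ)) (i : I) :
    Integrable (fun t => f ⟨i, t⟩) (μ i) :=
  (hf.mono_measure (Measure.le_sum (fun i => (μ i).map (Sigma.mk i)) i)).comp_measurable
    (measurable_sigma_mk i)

/-- The component map -/
noncomputable def compL (i : I) : Lp ℝ 1 (sigM μ) →ₗ[ℝ] Lp ℝ 1 (μ i) where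
  toFun h := (sigM_integrable μ (L1.integrable_coeFn h) i).toL1 _
  map_add' h k := by
    rw [← Integrable.toL1_add, Integrable.toL1_eq_toL1_iff]
    filter_upwards [sigM_ae μ (Lp.coeFn_add h k) i] with t ht
    rw [ht]; rfl
  map_smul' c h := by
    rw [RingHom.id_apply, ← Integrable.toL1_smul', Integrable.toL1_eq_toL1_iff]
    filter_upwards [sigM_ae μ (Lp.coeFn_smul c h) i] with t ht
    rw [ht]; rfl

lemma compL_eq (i : I) (h : Lp ℝ 1 (sigM μ)) :
    compL μ i h = (sigM_integrable μ (L1.integrable_coeFn h) i).toL1 _ := rfl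

lemma hasSum_norm_comp (h : Lp ℝ 1 (sigM μ)) : HasSum (fun i => ‖compL μ i h‖) ‖h‖ := by
  have hm : Measurable fun x => ‖h x‖ₑ := (Lp.stronglyMeasurable h).measurable.enorm
  have e := lintegral_sigM μ _ hm
  have hfin : ∫⁻ x, ‖h x‖ₑ ∂(sigM μ) ≠ ∞ := (L1.integrable_coeFn h).2.ne
  rw [L1.norm_def, e]
  rw [e] at hfin
  rw [ENNReal.tsum_toReal_eq (ENNReal.ne_top_of_tsum_ne_top hfin)]
  convert ENNReal.hasSum_toReal hfin using 2 with i
  rw [compL_eq, Integrable.norm_toL1_eq_lintegral_enorm]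

theorem sigma_L1 {D : Type w} [NormedAddCommGroup D] [NormedSpace ℝ D] [CompleteSpace D]
    (V : ∀ i, Lp ℝ 1 (μ i) →ₗᵢ[ℝ] D)
    (hns : ∀ (s : Finset I) (h : ∀ i, Lp ℝ 1 (μ i)), ‖∑ i ∈ s, V i (h i)‖ = ∑ i ∈ s, ‖h i‖)
    (hsur : ∀ G, ∃ h : ∀ i, Lp ℝ 1 (μ i), (Summable fun i => ‖h i‖) ∧
        HasSum (fun i => V i (h i)) G) :
    Nonempty (D ≃ₗᵢ[ℝ] Lp ℝ 1 (sigM μ)) := by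
  have hs : ∀ h : Lp ℝ 1 (sigM μ), Summable fun i => V i (compL μ i h) := by
    intro h
    refine Summable.of_norm ?_
    convert (hasSum_norm_comp μ h).summable using 2 with i
    exact (V i).norm_map _
  let T : Lp ℝ 1 (sigM μ) →ₗᵢ[ℝ] D :=
    { toFun := fun h => ∑' i, V i (compL μ i h)
      map_add' := by
        intro h k
        rw [← (hs h).tsum_add (hs k)]
        congr 1; ext i
        rw [(compL μ i).map_add, (V i).map_add]
      map_smul' := by
        intro c h
        rw [RingHom.id_apply, ← (hs h).tsum_const_smul c]
        congr 1; ext i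
        rw [(compL μ i).map_smul, (V i).map_smul]
      norm_map' := by
        intro h
        change ‖∑' i, V i (compL μ i h)‖ = ‖h‖
        have h1 : Tendsto (fun s : Finset I => ‖∑ i ∈ s, V i (compL μ i h)‖) atTop
          (𝓝 ‖∑' i, V i (compL μ i h)‖) := (hs h).hasSum.norm
        have h2 : Tendsto (fun s : Finset I => ∑ i ∈ s, ‖compL μ i h‖) atTop (𝓝 ‖h‖) :=
          hasSum_norm_comp μ h
        refine tendsto_nhds_unique h1 (h2.congr fun s => (hns s _).symm) }
  refine ⟨(LinearIsometryEquiv.ofSurjective T ?_).symm⟩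
  intro G
  obtain ⟨k, hk, hG⟩ := hsur G
  let f : Sigma β → ℝ := fun x => k x.1 x.2
  have hfm : Measurable f := measurable_sigma_iff f fun i => (Lp.stronglyMeasurable (k i)).measurable
  have hfi : Integrable f (sigM μ) := by
    refine ⟨hfm.aestronglyMeasurable, ?_⟩
    rw [HasFiniteIntegral, lintegral_sigM μ _ hfm.enorm]
    have : ∀ i, ∫⁻ t, ‖f ⟨i, t⟩‖ₑ ∂(μ i) = ENNReal.ofReal ‖k i‖ := fun i =>
      (L1.ofReal_norm_eq_lintegral (k i)).symm
    simp_rw [this]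
    exact hk.tsum_ofReal_lt_top
  refine ⟨hfi.toL1 f, ?_⟩
  have hc : ∀ i, compL μ i (hfi.toL1 f) = k i := by
    intro i
    apply Lp.ext
    have h1 := (sigM_integrable μ (L1.integrable_coeFn (hfi.toL1 f)) i).coeFn_toL1
    rw [← compL_eq] at h1
    filter_upwards [h1, sigM_ae μ hfi.coeFn_toL1 i] with t h1 h2
    rw [h1, h2]
  change ∑' i, V i (compL μ i (hfi.toL1 f)) = G
  simp_rw [hc]
  exact hG.tsum_eq
end Ssum

theorem main_aux {I : Type u} {β : I → Type u} [mβ : ∀ i, MeasurableSpace (β i)]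
    (μ : ∀ i, Measure (β i)) {Z : Type u} [NormedAddCommGroup Z]
    [NormedSpace ℝ Z] {D : Type u} [NormedAddCommGroup D]
    [NormedSpace ℝ D] [CompleteSpace D] (φ : D →ₗᵢ[ℝ] Z) (r : Z →L[ℝ] D)
    (hrφ : ∀ d, r (φ d) = d) (V : ∀ i, Lp ℝ 1 (μ i) →ₗᵢ[ℝ] Z)
    (hVP' : ∀ i h, φ (r (V i h)) = V i h)
    (hns : ∀ (s : Finset I) (h : ∀ i, Lp ℝ 1 (μ i)), ‖∑ i ∈ s, V i (h i)‖ = ∑ i ∈ s, ‖h i‖)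
    (hsur : ∀ d, ∃ h : ∀ i, Lp ℝ 1 (μ i), (Summable fun i => ‖h i‖) ∧
        HasSum (fun i => V i (h i)) (φ d)) :
    Nonempty (D ≃ₗᵢ[ℝ] Lp ℝ 1 (sigM μ)) := by
  refine sigma_L1 μ (fun i => ⟨(r : Z →ₗ[ℝ] D).comp (V i).toLinearMap, fun h => ?_⟩) ?_ ?_
  · change ‖r (V i h)‖ = _
    rw [← φ.norm_map, hVP', (V i).norm_map]
  · intro s h
    rw [← hns s h, ← φ.norm_map]
    change ‖φ (∑ i ∈ s, r (V i (h i)))‖ = _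
    rw [map_sum]
    congr 1
    exact Finset.sum_congr rfl fun i _ => hVP' i _
  · intro d
    obtain ⟨h, h1, h2⟩ := hsur d
    refine ⟨h, h1, ?_⟩
    have := r.hasSum h2
    rw [hrφ] at this
    exact this

/-- Abstract conclusion: a 1-complemented copy. -/
theorem ZProp.main {K : Type u} [MeasurableSpace K] {Z : Type u} [NormedAddCommGroup Z]
    [NormedSpace ℝ Z] [CompleteSpace Z] (hZ : ZProp K Z) {D : Type u} [NormedAddCommGroup D]
    [NormedSpace ℝ D] [CompleteSpace D] (φ : D →ₗᵢ[ℝ] Z) (r : Z →L[ℝ] D) (hr : ∀ G, ‖r G‖ ≤ ‖G‖)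
    (hrφ : ∀ d, r (φ d) = d) :
    ∃ (α : Type u) (m : MeasurableSpace α) (μ : @MeasureTheory.Measure α m),
    Nonempty (D ≃ₗᵢ[ℝ] MeasureTheory.Lp ℝ 1 μ) := by
  obtain ⟨I, m, μ, hμ, V, hVP, hns, hsur⟩ := hZ.M_decomp (φ.toContinuousLinearMap.comp r)
    (fun G => by simpa using hr G)
  exact ⟨_, _, _, main_aux (mβ := m) μ φ r hrφ V hVP hns fun d => hsur (φ d) (by simp [hrφ])⟩


theorem exists_extension_op {X Y : Type*} [NormedAddCommGroup X] [NormedSpace ℝ X]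
    [NormedAddCommGroup Y] [NormedSpace ℝ Y] (i : X →ₗᵢ[ℝ] Y)
    (hi : IsIdeal (LinearMap.range i.toLinearMap)) :
    ∃ φ : (X →L[ℝ] ℝ) →ₗᵢ[ℝ] (Y →L[ℝ] ℝ), ∀ f x, φ f (i x) = f x := by
  classical
  have h0 : ∀ (p : Finset Y × ℕ), ∃ T : Submodule.span ℝ (p.1 : Set Y) →ₗ[ℝ] X,
      (∀ (e : Submodule.span ℝ (p.1 : Set Y)) (x : X), (e : Y) = i x → T e = x) ∧ ∀ e, ‖T e‖ ≤ (1 + 1 / ((p.2 : ℝ) + 1)) * ‖e‖ := by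
    intro p
    obtain ⟨T, h1, h2⟩ := hi (1 / ((p.2 : ℝ) + 1)) (by positivity)
      (Submodule.span ℝ (p.1 : Set Y)) inferInstance
    refine ⟨i.equivRange.symm.toLinearEquiv.toLinearMap.comp T, ?_, ?_⟩
    · intro e x hex
      have h3 : T e = i.equivRange x := by
        apply Subtype.ext
        rw [h1 e (by rw [hex]; exact ⟨x, rfl⟩), hex]; rfl
      change i.equivRange.symm (T e) = x
      rw [h3]; simp
    · intro e
      change ‖i.equivRange.symm (T e)‖ ≤ _
      rw [LinearIsometryEquiv.norm_map]
      exact h2 e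
  choose T hT hTn using h0
  let q : Finset Y × ℕ → (X →L[ℝ] ℝ) → Y → ℝ := fun p f y =>
    if h : y ∈ Submodule.span ℝ (p.1 : Set Y) then f (T p ⟨y, h⟩) else 0
  have hq : ∀ p f y, |q p f y| ≤ (1 + 1 / ((p.2 : ℝ) + 1)) * (‖f‖ * ‖y‖) := by
    intro p f y
    by_cases h : y ∈ Submodule.span ℝ (p.1 : Set Y)
    · simp only [q, dif_pos h]
      refine (f.le_opNorm _).trans ?_
      have := mul_le_mul_of_nonneg_left (hTn p ⟨y, h⟩) (norm_nonneg f)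
      refine this.trans (le_of_eq ?_)
      rw [show ‖(⟨y, h⟩ : Submodule.span ℝ (p.1 : Set Y))‖ = ‖y‖ from rfl]; ring
    · simp only [q, dif_neg h, abs_zero]; positivity
  let 𝒰 : Ultrafilter (Finset Y × ℕ) := Ultrafilter.of atTop
  have h𝒰 : (𝒰 : Filter (Finset Y × ℕ)) ≤ atTop := Ultrafilter.of_le _
  have hmem : ∀ y, ∀ᶠ p in (𝒰 : Filter (Finset Y × ℕ)), y ∈ Submodule.span ℝ (p.1 : Set Y) := by
    intro y
    refine h𝒰 ?_
    filter_upwards [eventually_ge_atTop (({y} : Finset Y), 0)] with p hp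
    exact Submodule.subset_span (hp.1 (by simp))
  have hex : ∀ f y, ∃ l, Tendsto (fun p => q p f y) 𝒰 (𝓝 l) := by
    intro f y
    have hc : IsCompact (Icc (-(2 * (‖f‖ * ‖y‖))) (2 * (‖f‖ * ‖y‖))) := isCompact_Icc
    obtain ⟨l, -, hl⟩ := hc.ultrafilter_le_nhds (𝒰.map fun p => q p f y) (by
      rw [le_principal_iff, Ultrafilter.mem_coe, Ultrafilter.mem_map]
      refine Filter.mem_of_superset univ_mem fun p _ => ?_
      refine abs_le.1 ((hq p f y).trans ?_)
      refine mul_le_mul_of_nonneg_right ?_ (by positivity)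
      have : 1 / ((p.2 : ℝ) + 1) ≤ 1 := by
        rw [div_le_one (by positivity)]; linarith [Nat.cast_nonneg (α := ℝ) p.2]
      linarith)
    exact ⟨l, hl⟩
  choose L hL using hex
  have hLb : ∀ f y, |L f y| ≤ ‖f‖ * ‖y‖ := by
    intro f y
    have h1 : Tendsto (fun p : Finset Y × ℕ => (1 + 1 / ((p.2 : ℝ) + 1)) * (‖f‖ * ‖y‖)) 𝒰
        (𝓝 ((1 + 0) * (‖f‖ * ‖y‖))) := by
      refine Tendsto.mul_const _ (tendsto_const_nhds.add ?_)
      refine Tendsto.mono_left ?_ h𝒰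
      exact tendsto_one_div_add_atTop_nhds_zero_nat.comp (by
        rw [← prod_atTop_atTop_eq]; exact tendsto_snd)
    rw [add_zero, one_mul] at h1
    exact le_of_tendsto_of_tendsto' (hL f y).abs h1 fun p => hq p f y
  have hLadd : ∀ f y z, L f (y + z) = L f y + L f z := by
    intro f y z
    refine tendsto_nhds_unique (hL f (y + z)) (((hL f y).add (hL f z)).congr' ?_)
    filter_upwards [hmem y, hmem z] with p h1 h2
    simp only [q, dif_pos h1, dif_pos h2, dif_pos (Submodule.add_mem _ h1 h2)]
    rw [← f.map_add, ← (T p).map_add]; rfl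
  have hLsmul : ∀ f (c : ℝ) y, L f (c • y) = c * L f y := by
    intro f c y
    refine tendsto_nhds_unique (hL f (c • y)) (((hL f y).const_mul c).congr' ?_)
    filter_upwards [hmem y] with p h1
    simp only [q, dif_pos h1, dif_pos (Submodule.smul_mem _ c h1)]
    rw [← smul_eq_mul, ← f.map_smul, ← (T p).map_smul]; rfl
  have hLfadd : ∀ f g y, L (f + g) y = L f y + L g y := by
    intro f g y
    refine tendsto_nhds_unique (hL (f + g) y) (((hL f y).add (hL g y)).congr' ?_)
    filter_upwards [hmem y] with p h1
    simp only [q, dif_pos h1]; rfl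
  have hLfsmul : ∀ (c : ℝ) f y, L (c • f) y = c * L f y := by
    intro c f y
    refine tendsto_nhds_unique (hL (c • f) y) (((hL f y).const_mul c).congr' ?_)
    filter_upwards [hmem y] with p h1
    simp only [q, dif_pos h1]; rfl
  have hLi : ∀ f x, L f (i x) = f x := by
    intro f x
    refine tendsto_nhds_unique (hL f (i x)) (tendsto_const_nhds.congr' ?_)
    filter_upwards [hmem (i x)] with p h1
    simp only [q, dif_pos h1]
    rw [hT p ⟨i x, h1⟩ x rfl]
  let Φ : (X →L[ℝ] ℝ) → (Y →L[ℝ] ℝ) := fun f =>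
    LinearMap.mkContinuous
      { toFun := L f, map_add' := hLadd f, map_smul' := hLsmul f } ‖f‖ (hLb f)
  have hΦ : ∀ f y, Φ f y = L f y := fun f y => rfl
  refine ⟨{ toFun := Φ, map_add' := ?_, map_smul' := ?_, norm_map' := ?_ }, ?_⟩
  · intro f g; ext y
    rw [_root_.add_apply, hΦ, hΦ, hΦ, hLfadd]
  · intro c f; ext y
    rw [RingHom.id_apply, _root_.smul_apply, hΦ, hΦ, hLfsmul, smul_eq_mul]
  · intro f
    refine le_antisymm (ContinuousLinearMap.opNorm_le_bound _ (norm_nonneg f) (hLb f)) ?_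
    refine ContinuousLinearMap.opNorm_le_bound _ (norm_nonneg _) fun x => ?_
    have := (Φ f).le_opNorm (i x)
    rw [hΦ, hLi, i.norm_map] at this
    exact this
  · intro f x
    exact hLi f x

theorem lind_of_ideal (X : Type u) [NormedAddCommGroup X] [NormedSpace ℝ X] [CompleteSpace X]
    (H : ∀ (Y : Type u) [NormedAddCommGroup Y] [NormedSpace ℝ Y] [CompleteSpace Y],
        ∀ i : X →ₗᵢ[ℝ] Y, IsIdeal (LinearMap.range i.toLinearMap)) : IsLindenstrauss X := by
  let K := (WeakDual.toStrongDual ⁻¹' Metric.closedBall (0 : StrongDual ℝ X) 1 : Set (WeakDual ℝ X))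
  have hK : CompactSpace K := isCompact_iff_compactSpace.1 (WeakDual.isCompact_closedBall _ _)
  let _ : MeasurableSpace K := borel K
  have : BorelSpace K := ⟨rfl⟩
  let e : X → C(K, ℝ) := fun x => ⟨fun f => (f : WeakDual ℝ X) x,
    (WeakDual.eval_continuous x).comp continuous_subtype_val⟩
  have he : ∀ x (f : K), e x f = (f : WeakDual ℝ X) x := fun _ _ => rfl
  have hfn : ∀ f : K, ‖WeakDual.toStrongDual (f : WeakDual ℝ X)‖ ≤ 1 := fun f => by
    have := f.2
    exact mem_closedBall_zero_iff.1 this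
  let i : X →ₗᵢ[ℝ] C(K, ℝ) :=
    { toFun := e
      map_add' := fun x y => by ext f; simp [he]
      map_smul' := fun c x => by ext f; simp [he]
      norm_map' := by
        intro x
        change ‖e x‖ = ‖x‖
        refine le_antisymm ?_ ?_
        · rw [ContinuousMap.norm_le _ (norm_nonneg x)]
          intro f
          rw [he]
          have := (WeakDual.toStrongDual (f : WeakDual ℝ X)).le_opNorm x
          refine this.trans ?_
          exact mul_le_of_le_one_left (norm_nonneg _) (hfn f)
        · obtain ⟨g, hg1, hg2⟩ := exists_dual_vector'' ℝ x
          have hgK : StrongDual.toWeakDual g ∈ K := by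
            simpa [K] using hg1
          have := (e x).norm_coe_le_norm ⟨StrongDual.toWeakDual g, hgK⟩
          rw [he] at this
          change ‖g x‖ ≤ _ at this
          rw [hg2] at this
          simpa using this }
  obtain ⟨φ, hφ⟩ := exists_extension_op i (H C(K, ℝ) i)
  let r : (C(K, ℝ) →L[ℝ] ℝ) →L[ℝ] (X →L[ℝ] ℝ) :=
    (ContinuousLinearMap.compL ℝ X C(K, ℝ) ℝ).flip i.toContinuousLinearMap
  refine (zProp_C K).main φ r ?_ ?_
  · intro G
    refine ContinuousLinearMap.opNorm_le_bound _ (norm_nonneg G) fun x => ?_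
    have := G.le_opNorm (i x)
    rwa [i.norm_map] at this
  · intro d
    ext x
    exact hφ d x


theorem L1_dual_estimate {X α ι : Type*} [NormedAddCommGroup X] [NormedSpace ℝ X]
    [MeasurableSpace α] {μ : Measure α} [Fintype ι]
    (Φ : (X →L[ℝ] ℝ) ≃ₗᵢ[ℝ] Lp ℝ 1 μ) (f : ι → Lp ℝ 1 μ) (x : ι → X) :
    |∑ i, Φ.symm (f i) (x i)| ≤ ∫ t, ‖∑ i, f i t • x i‖ ∂μ := by
  classical
  let T : Set α → (X →L[ℝ] ℝ) := fun A =>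
    if h : MeasurableSet A ∧ μ A ≠ ∞ then Φ.symm (indicatorConstLp 1 h.1 h.2 (1:ℝ)) else 0
  have hTs : ∀ s (hs : MeasurableSet s) (hμ : μ s ≠ ∞),
      T s = Φ.symm (indicatorConstLp 1 hs hμ (1:ℝ)) := fun s hs hμ => by
    simp only [T]; rw [dif_pos ⟨hs, hμ⟩]
  have hT : DominatedFinMeasAdditive μ T 1 := by
    constructor
    · intro s t hs ht hμs hμt hst
      rw [hTs s hs hμs, hTs t ht hμt, hTs _ (hs.union ht) (by finiteness),
        indicatorConstLp_disjoint_union hs ht hμs hμt hst, map_add]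
    · intro s hs hμs
      rw [hTs s hs hμs.ne, Φ.symm.norm_map, norm_indicatorConstLp one_ne_zero ENNReal.one_ne_top]
      simp
  let S := fun v : X => (ContinuousLinearMap.toSpanSingleton ℝ v).compLpL 1 μ
  have key : ∀ (v : X) (g : Lp ℝ 1 μ), L1.setToL1 hT (S v g) = Φ.symm g v := by
    intro v g
    induction g using Lp.induction ENNReal.one_ne_top with
    | indicatorConst c hs hμs =>
      rename_i s
      have h1 : S v (indicatorConstLp 1 hs hμs.ne c) = indicatorConstLp 1 hs hμs.ne (c • v) := by
        apply Lp.ext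
        refine (ContinuousLinearMap.coeFn_compLpL _ _).trans ?_
        filter_upwards [indicatorConstLp_coeFn (p := 1) (hs := hs) (hμs := hμs.ne) (c := c),
          indicatorConstLp_coeFn (p := 1) (hs := hs) (hμs := hμs.ne) (c := c • v)] with t h1 h2
        rw [h1, h2]
        by_cases ht : t ∈ s <;> simp [ht]
      have h2 : indicatorConstLp 1 hs hμs.ne c = c • indicatorConstLp 1 hs hμs.ne (1:ℝ) := by
        apply Lp.ext
        filter_upwards [indicatorConstLp_coeFn (p := 1) (hs := hs) (hμs := hμs.ne) (c := c),
          indicatorConstLp_coeFn (p := 1) (hs := hs) (hμs := hμs.ne) (c := (1:ℝ)),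
          Lp.coeFn_smul c (indicatorConstLp 1 hs hμs.ne (1:ℝ))] with t h1 h2 h3
        rw [h1, h3, Pi.smul_apply, h2]
        by_cases ht : t ∈ s <;> simp [ht]
      rw [Lp.simpleFunc.coe_indicatorConst, h1, L1.setToL1_indicatorConstLp, hTs s hs hμs.ne, h2]
      simp
    | add hf hg hd h1 h2 =>
      rw [map_add, map_add, h1, h2, map_add]; rfl
    | isClosed =>
      apply isClosed_eq
      · fun_prop
      · have : Continuous fun g => (ContinuousLinearMap.apply ℝ ℝ v) (Φ.symm g) := by fun_prop
        exact this
  have e1 : ∑ i, Φ.symm (f i) (x i) = L1.setToL1 hT (∑ i, S (x i) (f i)) := by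
    rw [map_sum]; exact Finset.sum_congr rfl fun i _ => (key _ _).symm
  rw [e1, ← Real.norm_eq_abs]
  refine (L1.norm_setToL1_le_mul_norm hT zero_le_one _).trans ?_
  rw [one_mul, L1.norm_eq_integral_norm]
  apply le_of_eq
  apply integral_congr_ae
  have h3 : ∀ i, ∀ᵐ t ∂μ, S (x i) (f i) t = f i t • x i := fun i => by
    filter_upwards [ContinuousLinearMap.coeFn_compLpL (p := 1) (μ := μ)
      (ContinuousLinearMap.toSpanSingleton ℝ (x i)) (f i)] with t ht
    rw [ht]; simp
  filter_upwards [ae_all_iff.2 h3, Lp.coeFn_finsetSum Finset.univ (fun i => S (x i) (f i))] with t h4 h5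
  rw [h5, Finset.sum_apply]
  simp [h4]


theorem ideal_key {X α ι E : Type*} [NormedAddCommGroup X] [NormedSpace ℝ X]
    [MeasurableSpace α] {μ : Measure α} [Fintype ι]
    (Φ : (X →L[ℝ] ℝ) ≃ₗᵢ[ℝ] Lp ℝ 1 μ)
    [NormedAddCommGroup E] [NormedSpace ℝ E] [FiniteDimensional ℝ E]
    (F : Submodule ℝ E) (j : F →ₗᵢ[ℝ] X) (y : ι → E) (hy : ∀ i, ‖y i‖ ≤ 1)
    {η : ℝ} (hη : 0 < η) :
    ∃ T : E →ₗ[ℝ] X, (∀ z : F, T z = j z) ∧ ∀ i, ‖T (y i)‖ < 1 + η := by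
  classical
  by_contra hcon
  push Not at hcon
  obtain ⟨P, hP⟩ := LinearMap.exists_leftInverse_of_injective F.subtype F.ker_subtype
  have hP' : ∀ z : F, P z = z := fun z => LinearMap.congr_fun hP z
  let C : Set (ι → X) := {v | ∃ T : E →ₗ[ℝ] X, (∀ z : F, T z = j z) ∧ v = fun i => T (y i)}
  have hC : Convex ℝ C := by
    rintro _ ⟨T, hT, rfl⟩ _ ⟨S, hS, rfl⟩ a b ha hb hab
    refine ⟨a • T + b • S, fun z => ?_, ?_⟩
    · simp only [LinearMap.add_apply, LinearMap.smul_apply, hT, hS]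
      rw [← add_smul, hab, one_smul]
    · ext i; simp
  have hdisj : Disjoint (Metric.ball (0 : ι → X) (1 + η)) C := by
    rw [Set.disjoint_left]
    rintro _ hv ⟨T, hT, rfl⟩
    obtain ⟨i, hi⟩ := hcon T hT
    rw [mem_ball_zero_iff, pi_norm_lt_iff (by linarith)] at hv
    exact absurd (hv i) (not_lt.2 hi)
  obtain ⟨f, u, hf1, hf2⟩ := geometric_hahn_banach_open (convex_ball _ _) Metric.isOpen_ball hC hdisj
  have hu : 0 < u := by
    have := hf1 0 (by simp; linarith)
    simpa using this
  let xs : ι → (X →L[ℝ] ℝ) := fun i => f.comp (ContinuousLinearMap.single ℝ (fun _ => X) i)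
  have hfx : ∀ v : ι → X, f v = ∑ i, xs i (v i) := by
    intro v
    conv_lhs => rw [← Finset.univ_sum_single v]
    rw [map_sum]; rfl
  set A : ℝ := ∑ i, ‖xs i‖ with hA
  have hA0 : 0 ≤ A := Finset.sum_nonneg fun i _ => norm_nonneg _
  have hAu : (1 + η) * A ≤ u := by
    have : ∀ δ > 0, (1 + η) * (A - Fintype.card ι * δ) ≤ u := by
      intro δ hδ
      have : ∀ i, ∃ w : X, ‖w‖ < 1 ∧ ‖xs i‖ - δ ≤ xs i w := by
        intro i
        by_cases h0 : 0 ≤ ‖xs i‖ - δ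
        · obtain ⟨w, hw, hw2⟩ := (xs i).exists_lt_apply_of_lt_opNorm (r := ‖xs i‖ - δ) (by linarith)
          rcases le_total 0 (xs i w) with h | h
          · refine ⟨w, hw, ?_⟩
            rw [Real.norm_of_nonneg h] at hw2; exact hw2.le
          · refine ⟨-w, by simpa using hw, ?_⟩
            rw [Real.norm_of_nonpos h] at hw2
            rw [map_neg]; exact hw2.le
        · exact ⟨0, by simp, by simp; linarith⟩
      choose w hw1 hw2 using this
      have h := hf1 (fun i => (1 + η) • w i) (by
        rw [mem_ball_zero_iff, pi_norm_lt_iff (by linarith)]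
        intro i
        rw [norm_smul, Real.norm_of_nonneg (by linarith)]
        nlinarith [hw1 i])
      rw [hfx] at h
      have h2 : ∑ i, (‖xs i‖ - δ) ≤ ∑ i, xs i (w i) := Finset.sum_le_sum fun i _ => hw2 i
      rw [Finset.sum_sub_distrib] at h2
      simp only [Finset.sum_const, Finset.card_univ, nsmul_eq_mul] at h2
      have h3 : ∑ i, xs i ((1 + η) • w i) = (1 + η) * ∑ i, xs i (w i) := by
        rw [Finset.mul_sum]; exact Finset.sum_congr rfl fun i _ => by rw [map_smul, smul_eq_mul]
      rw [h3] at h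
      nlinarith
    have hlim : Tendsto (fun δ : ℝ => (1 + η) * (A - Fintype.card ι * δ)) (𝓝[>] 0) (𝓝 ((1 + η) * A)) := by
      have : Continuous (fun δ : ℝ => (1 + η) * (A - Fintype.card ι * δ)) := by fun_prop
      have h := (this.tendsto 0).mono_left (nhdsWithin_le_nhds (s := Ioi 0))
      simpa using h
    exact le_of_tendsto hlim (by filter_upwards [self_mem_nhdsWithin] with δ hδ using this δ hδ)
  let T0 : E →ₗ[ℝ] X := j.toLinearMap ∘ₗ P
  have hT0 : ∀ z : F, T0 z = j z := fun z => by simp [T0, hP' z]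
  have hzero : ∀ T : E →ₗ[ℝ] X, (∀ z : F, T z = 0) → ∑ i, xs i (T (y i)) = 0 := by
    intro T hT
    set s := ∑ i, xs i (T (y i)) with hs
    set s0 := ∑ i, xs i (T0 (y i)) with hs0
    have : ∀ c : ℝ, u ≤ s0 + c * s := by
      intro c
      have h := hf2 (fun i => (T0 + c • T) (y i)) ⟨_, fun z => by simp [hT z, hT0 z], rfl⟩
      rw [hfx] at h
      simpa [Finset.sum_add_distrib, ← Finset.mul_sum] using h
    by_contra hne
    have h := this ((u - 1 - s0) / s)
    rw [div_mul_cancel₀ _ hne] at h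
    linarith
  have hzero' : ∀ ℓ : E →ₗ[ℝ] ℝ, (∀ z : F, ℓ z = 0) → ∑ i, ℓ (y i) • xs i = 0 := by
    intro ℓ hℓ
    ext v
    have := hzero (ℓ.smulRight v) (fun z => by simp [hℓ z])
    simpa using this
  let g : ι → Lp ℝ 1 μ := fun i => Φ (xs i)
  let b := Module.finBasis ℝ E
  have hae : ∀ k, ∀ᵐ t ∂μ, ∑ i, b.coord k (y i - P (y i)) * g i t = 0 := by
    intro k
    have h := hzero' (b.coord k ∘ₗ (LinearMap.id - F.subtype ∘ₗ P)) (fun z => by simp [hP' z])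
    have h2 := congrArg Φ h
    rw [map_sum, map_zero] at h2
    have h3 : ∑ i, b.coord k (y i - P (y i)) • g i = 0 := by
      rw [← h2]
      refine Finset.sum_congr rfl fun i _ => ?_
      rw [map_smul]; rfl
    have h4 := Lp.coeFn_finsetSum Finset.univ (fun i => b.coord k (y i - P (y i)) • g i)
    rw [h3] at h4
    filter_upwards [h4, Lp.coeFn_zero ℝ 1 μ, ae_all_iff.2 fun i => Lp.coeFn_smul (b.coord k (y i - P (y i))) (g i)] with t h5 h6 h7
    rw [h6] at h5
    rw [Pi.zero_apply, Finset.sum_apply] at h5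
    rw [h5]
    refine Finset.sum_congr rfl fun i _ => ?_
    rw [h7 i]; rfl
  have hae2 : ∀ᵐ t ∂μ, ∑ i, g i t • y i = ((∑ i, g i t • P (y i) : F) : E) := by
    filter_upwards [ae_all_iff.2 hae] with t ht
    rw [← sub_eq_zero]
    apply b.ext_elem
    intro k
    have := ht k
    rw [map_zero, Finsupp.zero_apply, ← Module.Basis.coord_apply, ← this]
    simp only [map_sub, map_sum, Submodule.coe_sum, map_smul, Submodule.coe_smul, smul_eq_mul,
      ← Finset.sum_sub_distrib]
    exact Finset.sum_congr rfl fun i _ => by ring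
  have h1 := hf2 (fun i => T0 (y i)) ⟨T0, hT0, rfl⟩
  rw [hfx] at h1
  have h2 := L1_dual_estimate Φ g (fun i => T0 (y i))
  have h3 : ∑ i, Φ.symm (g i) (T0 (y i)) = ∑ i, xs i (T0 (y i)) :=
    Finset.sum_congr rfl fun i _ => by simp [g]
  rw [h3] at h2
  have hintg : ∀ i, Integrable (fun t => ‖g i t‖) μ := fun i => (L1.integrable_coeFn (g i)).norm
  have h4 : ∫ t, ‖∑ i, g i t • T0 (y i)‖ ∂μ ≤ ∫ t, ∑ i, ‖g i t‖ ∂μ := by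
    apply integral_mono_of_nonneg (Eventually.of_forall fun t => norm_nonneg _)
      (integrable_finsetSum _ fun i _ => hintg i)
    filter_upwards [hae2] with t ht
    have : ∑ i, g i t • T0 (y i) = j (∑ i, g i t • P (y i)) := by
      simp [T0, map_sum]
    rw [this, j.norm_map, Submodule.coe_norm, ← ht]
    refine (norm_sum_le _ _).trans (Finset.sum_le_sum fun i _ => ?_)
    rw [norm_smul]
    exact mul_le_of_le_one_right (norm_nonneg _) (hy i)
  rw [integral_finsetSum _ fun i _ => hintg i] at h4
  have h5 : ∑ i, ∫ t, ‖g i t‖ ∂μ = A := by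
    refine Finset.sum_congr rfl fun i _ => ?_
    rw [← L1.norm_eq_integral_norm]; exact Φ.norm_map _
  rw [h5] at h4
  have h6 := le_abs_self (∑ i, xs i (T0 (y i)))
  have h7 : (1 + η) * A ≤ A := by linarith
  have h8 : A ≤ 0 := by nlinarith
  linarith


theorem ideal_of_lind {X Y : Type*} [NormedAddCommGroup X] [NormedSpace ℝ X]
    [NormedAddCommGroup Y] [NormedSpace ℝ Y]
    (hX : IsLindenstrauss X) (i : X →ₗᵢ[ℝ] Y) : IsIdeal (LinearMap.range i.toLinearMap) := by
  classical
  obtain ⟨α, m, μ, ⟨Φ⟩⟩ := hX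
  intro ε hε E hE
  let F : Submodule ℝ E := (LinearMap.range i.toLinearMap).comap E.subtype
  let e := i.equivRange
  let j : F →ₗᵢ[ℝ] X :=
    { toLinearMap := e.symm.toLinearEquiv.toLinearMap ∘ₗ
        LinearMap.codRestrict (LinearMap.range i.toLinearMap) (E.subtype ∘ₗ F.subtype) (fun z => z.2)
      norm_map' := fun z => by
        exact (e.symm.norm_map _) }
  have hj : ∀ z : F, i (j z) = ((z : E) : Y) := by
    intro z
    have : e (j z) = ⟨((z : E) : Y), z.2⟩ := e.apply_symm_apply _
    exact congrArg Subtype.val this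
  have hδ : 0 < ε / (2 * (1 + ε)) := by positivity
  have : ProperSpace E := FiniteDimensional.proper ℝ E
  obtain ⟨t, ht, htf, hcov⟩ := (isCompact_closedBall (0 : E) 1).finite_cover_balls hδ
  have := htf.fintype
  obtain ⟨T, hT1, hT2⟩ := ideal_key Φ F j (fun z : t => (z : E))
    (fun z => by simpa using ht z.2) (half_pos hε)
  let T' : E →L[ℝ] X := LinearMap.toContinuousLinearMap T
  have hTn : ‖T'‖ ≤ (1 + ε / 2) + ε / (2 * (1 + ε)) * ‖T'‖ := by
    refine T'.opNorm_le_of_unit_norm (by positivity) fun z hz => ?_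
    have := hcov (show z ∈ Metric.closedBall (0 : E) 1 by simp [hz])
    simp only [mem_iUnion] at this
    obtain ⟨w, hw, hzw⟩ := this
    have h1 : ‖T' w‖ < 1 + ε / 2 := hT2 ⟨w, hw⟩
    have h2 : ‖T' (z - w)‖ ≤ ‖T'‖ * (ε / (2 * (1 + ε))) :=
      T'.le_opNorm_of_le (by rw [← dist_eq_norm]; exact (Metric.mem_ball.1 hzw).le)
    have h3 : T' z = T' w + T' (z - w) := by rw [map_sub]; abel
    rw [h3]
    refine (norm_add_le _ _).trans ?_
    linarith
  have hTn2 : ‖T'‖ ≤ 1 + ε := by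
    have h1 : ε / (2 * (1 + ε)) * (2 * (1 + ε)) = ε := by field_simp
    set d := ε / (2 * (1 + ε))
    nlinarith [norm_nonneg T']
  refine ⟨e.toLinearEquiv.toLinearMap ∘ₗ T, fun z hz => ?_, fun z => ?_⟩
  · have h := hT1 ⟨z, hz⟩
    have h2 : i (T z) = z := by
      rw [show T z = j ⟨z, hz⟩ from h, hj]
    exact h2
  · have h : ‖e (T z)‖ = ‖T z‖ := e.norm_map _
    refine h.le.trans ?_
    exact (T'.le_opNorm z).trans (mul_le_mul_of_nonneg_right hTn2 (norm_nonneg _))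


end Helpers

theorem lindenstrauss_iff_ideal_in_every_superspace
    (X : Type u) [NormedAddCommGroup X] [NormedSpace ℝ X] [CompleteSpace X] :
    IsLindenstrauss X ↔
      ∀ (Y : Type u) [NormedAddCommGroup Y] [NormedSpace ℝ Y] [CompleteSpace Y],
        ∀ i : X →ₗᵢ[ℝ] Y, IsIdeal (LinearMap.range i.toLinearMap) := by
  exact ⟨fun h Y _ _ _ i => ideal_of_lind h i, fun H => lind_of_ideal X H⟩
end
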